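/- arXiv:2505.15264 — 6 statements merged into one kernel-verified Lean document; each statement's English description precedes it below -/
import Mathlib

section
/- For every natural number n and every real y: ‖Γ(1/2 − n + iy)‖² = (π/cosh(πy)) · ∏_{k=1}^{n} ((k − 1/2)² + y²)^{−1}, where Γ is the complex Gamma function and ‖·‖ is the complex absolute value. -/
open Real Finset

/-- `|Γ(1/2 - n + iy)|² = (π / cosh(πy)) · ∏_{k=1}^{n} ((k - 1/2)² + y²)⁻¹`. -/
theorem norm_Gamma_half_sub_nat_sq (n : ℕ) (y : ℝ) :
    ‖Complex.Gamma (1 / 2 - n + Complex.I * y)‖ ^ 2 =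
      (π / Real.cosh (π * y)) *
        ∏ k ∈ Finset.Icc 1 n, (((k : ℝ) - 1 / 2) ^ 2 + y ^ 2)⁻¹ := by
  induction n with
  | zero =>
    have h := Complex.Gamma_mul_Gamma_one_sub (1 / 2 + Complex.I * y)
    have h1 : (1 : ℂ) - (1 / 2 + Complex.I * y) =
        (starRingEnd ℂ) (1 / 2 + Complex.I * y) := by
      apply Complex.ext
      · simp; norm_num
      · simp
    have h2 : Complex.sin (π * (1 / 2 + Complex.I * y)) = ((Real.cosh (π * y) : ℝ) : ℂ) := by
      have : (π : ℂ) * (1 / 2 + Complex.I * y) = (π * y : ℂ) * Complex.I + π / 2 := by ring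
      rw [this, Complex.sin_add_pi_div_two, Complex.cos_mul_I]
      push_cast
      rfl
    rw [h1, Complex.Gamma_conj, Complex.mul_conj, h2, Complex.normSq_eq_norm_sq] at h
    have h3 : ‖Complex.Gamma (1 / 2 + Complex.I * y)‖ ^ 2 = π / Real.cosh (π * y) := by
      exact_mod_cast h
    simpa using h3
  | succ n ih =>
    rw [Finset.prod_Icc_succ_top (by omega), ← mul_assoc, ← ih]
    set s : ℂ := 1 / 2 - ((n + 1 : ℕ) : ℂ) + Complex.I * y with hs
    have e : (1 / 2 - (n : ℂ) + Complex.I * y) = s + 1 := by rw [hs]; push_cast; ring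
    have hre : s.re = 1 / 2 - ((n + 1 : ℕ) : ℝ) := by simp [hs]
    have him : s.im = y := by simp [hs]
    have hn : ‖s‖ ^ 2 = (((n + 1 : ℕ) : ℝ) - 1 / 2) ^ 2 + y ^ 2 := by
      rw [← Complex.normSq_eq_norm_sq, Complex.normSq_apply, hre, him]; ring
    have h0 : s ≠ 0 := by
      intro h
      rw [h] at hre
      push_cast at hre
      have : (0 : ℝ) ≤ n := Nat.cast_nonneg n
      simp only [Complex.zero_re] at hre
      linarith
    rw [e, Complex.Gamma_add_one s h0, ← hn, norm_mul]
    have : ‖s‖ ≠ 0 := norm_ne_zero_iff.mpr h0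
    field_simp
end

section
/- For every real k > 0 and every integer μ ≥ 0: c_{k,μ}² ≤ k^{1−2μ}, and hence c_{k,μ} ≤ k^{1/2−μ}. In particular, for each fixed μ one has c_{k,μ} = O(k^{−μ+1/2}) as k → ∞, uniformly in μ. -/
open Real

/-- The square `c_{k,μ}²` of the Mehler–Fock normalization constant
(a positive real number; we take the real part of the defining complex expression). -/
noncomputable def mfConstSq (k : ℝ) (μ : ℕ) : ℝ :=
  (((k * Real.sinh (π * k) / π : ℝ) : ℂ) *
      Complex.Gamma (1 / 2 - μ + Complex.I * k) *
      Complex.Gamma (1 / 2 - μ - Complex.I * k)).re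

/-- The Mehler–Fock normalization constant `c_{k,μ}`, the positive square root of `c_{k,μ}²`. -/
noncomputable def mfConst (k : ℝ) (μ : ℕ) : ℝ := Real.sqrt (mfConstSq k μ)

theorem mfConstSq_succ (k : ℝ) (hk : 0 < k) (μ : ℕ) :
    mfConstSq k μ = (((μ : ℝ) + 1 / 2) ^ 2 + k ^ 2) * mfConstSq k (μ + 1) := by
  have h1 : (1 / 2 - ((μ + 1 : ℕ) : ℂ) + Complex.I * k) ≠ 0 := by
    intro h
    have := congrArg Complex.im h
    simp at this
    linarith
  have h2 : (1 / 2 - ((μ + 1 : ℕ) : ℂ) - Complex.I * k) ≠ 0 := by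
    intro h
    have := congrArg Complex.im h
    simp at this
    linarith
  have e1 := Complex.Gamma_add_one _ h1
  have e2 := Complex.Gamma_add_one _ h2
  have a1 : (1 / 2 - ((μ + 1 : ℕ) : ℂ) + Complex.I * k) + 1 = 1 / 2 - μ + Complex.I * k := by
    push_cast; ring
  have a2 : (1 / 2 - ((μ + 1 : ℕ) : ℂ) - Complex.I * k) + 1 = 1 / 2 - μ - Complex.I * k := by
    push_cast; ring
  rw [a1] at e1
  rw [a2] at e2
  unfold mfConstSq
  rw [← Complex.re_ofReal_mul, e1, e2]
  congr 1
  have hp : (1 / 2 - ((μ + 1 : ℕ) : ℂ) + Complex.I * k) * (1 / 2 - ((μ + 1 : ℕ) : ℂ) - Complex.I * k)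
      = (((((μ : ℝ) + 1 / 2) ^ 2 + k ^ 2 : ℝ)) : ℂ) := by
    push_cast
    linear_combination (-(k : ℂ) ^ 2) * Complex.I_sq
  rw [← hp]
  ring

theorem mfConstSq_zero (k : ℝ) : mfConstSq k 0 = k * (Real.sinh (π * k) / Real.cosh (π * k)) := by
  have h := Complex.Gamma_mul_Gamma_one_sub (1 / 2 + Complex.I * k)
  have a : (1 : ℂ) - (1 / 2 + Complex.I * k) = 1 / 2 - Complex.I * k := by ring
  have b : Complex.sin (π * (1 / 2 + Complex.I * k)) = ((Real.cosh (π * k) : ℝ) : ℂ) := by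
    have : (π : ℂ) * (1 / 2 + Complex.I * k) = (π * k : ℂ) * Complex.I + π / 2 := by ring
    rw [this, Complex.sin_add_pi_div_two, Complex.cos_mul_I]
    push_cast
    rfl
  rw [a, b] at h
  unfold mfConstSq
  simp only [Nat.cast_zero, sub_zero]
  rw [mul_assoc, h, ← Complex.ofReal_div, ← Complex.ofReal_mul, Complex.ofReal_re]
  have := Real.pi_pos.ne'
  have := (Real.cosh_pos (π * k)).ne'
  field_simp

theorem mfConstSq_bounds (k : ℝ) (hk : 0 < k) (μ : ℕ) :
    0 ≤ mfConstSq k μ ∧ mfConstSq k μ ≤ k ^ ((1 : ℝ) - 2 * μ) := by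
  induction μ with
  | zero =>
    rw [mfConstSq_zero]
    have hc := Real.cosh_pos (π * k)
    have hs : 0 ≤ Real.sinh (π * k) := Real.sinh_nonneg_iff.2 (by positivity)
    refine ⟨by positivity, ?_⟩
    simp only [Nat.cast_zero, mul_zero, sub_zero, Real.rpow_one]
    have : Real.sinh (π * k) / Real.cosh (π * k) ≤ 1 :=
      (div_le_one hc).2 (Real.sinh_lt_cosh _).le
    nlinarith
  | succ n ih =>
    obtain ⟨h0, h1⟩ := ih
    rw [mfConstSq_succ k hk n] at h0 h1
    have hpos : 0 < ((n : ℝ) + 1 / 2) ^ 2 + k ^ 2 := by positivity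
    have h2 : 0 ≤ mfConstSq k (n + 1) := nonneg_of_mul_nonneg_right h0 hpos
    refine ⟨h2, ?_⟩
    have e : (1 : ℝ) - 2 * ((n + 1 : ℕ) : ℝ) = (1 - 2 * n) - (2 : ℕ) := by push_cast; ring
    rw [e, Real.rpow_sub_natCast hk.ne', le_div_iff₀ (by positivity)]
    have : 0 ≤ ((n : ℝ) + 1 / 2) ^ 2 * mfConstSq k (n + 1) := by positivity
    linarith

/-- For `k > 0` and integer `μ ≥ 0`: `c_{k,μ}² ≤ k^{1-2μ}` and `c_{k,μ} ≤ k^{1/2-μ}`;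
in particular `c_{k,μ} = O(k^{-μ+1/2})` as `k → ∞`, uniformly in `μ`. -/
theorem mfConst_le (k : ℝ) (hk : 0 < k) (μ : ℕ) :
    mfConstSq k μ ≤ k ^ ((1 : ℝ) - 2 * μ) ∧
    mfConst k μ ≤ k ^ ((1 : ℝ) / 2 - μ) := by
  have h := (mfConstSq_bounds k hk μ).2
  refine ⟨h, ?_⟩
  unfold mfConst
  apply Real.sqrt_le_iff.2
  refine ⟨by positivity, h.trans_eq ?_⟩
  rw [← Real.rpow_mul_natCast hk.le]
  congr 1
  push_cast
  ring
end

section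
/- For every real k > 0 and every integer μ ≥ 0, the function x ↦ E(k,μ,x) is twice differentiable on (0,∞) and satisfies the Pöschl–Teller eigenfunction equation −(d²/dx²)E(k,μ,x) + ((μ² − 1/4)/sinh²x)·E(k,μ,x) = k²·E(k,μ,x) for all x > 0. -/
open Real

/-- The Gauss hypergeometric series `₂F₁(a,b,c;z)`. -/
noncomputable def hyp2F1 (a b c z : ℂ) : ℂ :=
  ∑' n : ℕ, (ascPochhammer ℂ n).eval a * (ascPochhammer ℂ n).eval b /
      ((ascPochhammer ℂ n).eval c * (n.factorial : ℂ)) * z ^ n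

/-- `E(k,μ,x) = 2^{-μ} (tanh x)^{μ+1/2} (cosh x)^{-ik} (1/μ!)
  ₂F₁((μ+1/2+ik)/2, (μ+3/2+ik)/2, μ+1; tanh² x)`,
the weighted conical associated Legendre function `√(sinh x) 𝖯^{-μ}_{ik-1/2}(cosh x)`. -/
noncomputable def legE (k : ℝ) (μ : ℕ) (x : ℝ) : ℂ :=
  (2 : ℂ) ^ (-(μ : ℂ)) * ((Real.tanh x ^ ((μ : ℝ) + 1 / 2) : ℝ) : ℂ) *
    ((Real.cosh x : ℂ) ^ (-(Complex.I * k))) * ((μ.factorial : ℂ))⁻¹ *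
    hyp2F1 (((μ : ℂ) + 1 / 2 + Complex.I * k) / 2)
      (((μ : ℂ) + 3 / 2 + Complex.I * k) / 2) ((μ : ℂ) + 1)
      ((Real.tanh x ^ 2 : ℝ) : ℂ)

/-- absolute summability inside the unit disc -/
def HSum (f : ℕ → ℂ) : Prop := ∀ r : ℝ, 0 ≤ r → r < 1 → Summable fun n => ‖f n‖ * r ^ n

/-- coefficients of the derivative -/
def dco (f : ℕ → ℂ) : ℕ → ℂ := fun n => ((n : ℂ) + 1) * f (n + 1)

lemma bern (r s : ℝ) (hr : 0 ≤ r) (hrs : r ≤ s) (n : ℕ) :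
    ((n : ℝ) + 1) * r ^ n * (s - r) ≤ s ^ (n + 1) := by
  induction n with
  | zero => simp; linarith
  | succ n ih =>
    have h1 : r ^ (n + 1) ≤ s ^ (n + 1) := by gcongr
    have h2 := mul_le_mul_of_nonneg_left ih hr
    have h3 := mul_le_mul_of_nonneg_right h1 (sub_nonneg.2 hrs)
    push_cast
    calc ((n : ℝ) + 1 + 1) * r ^ (n + 1) * (s - r)
        = r * (((n : ℝ) + 1) * r ^ n * (s - r)) + r ^ (n + 1) * (s - r) := by ring
      _ ≤ r * s ^ (n + 1) + s ^ (n + 1) * (s - r) := by linarith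
      _ = s ^ (n + 1 + 1) := by ring

lemma HSum.dco {f : ℕ → ℂ} (h : HSum f) : HSum (dco f) := by
  intro r hr hr1
  set s := (1 + r) / 2 with hs
  have hsr : 0 < s - r := by rw [hs]; linarith
  have h1 := (summable_nat_add_iff 1).2 (h s (by linarith) (by rw [hs]; linarith))
  refine Summable.of_nonneg_of_le (fun n => by positivity) (fun n => ?_) (h1.mul_right (s - r)⁻¹)
  have hb := bern r s hr (by linarith) n
  rw [← div_eq_mul_inv, le_div_iff₀ hsr]
  have hn : ‖(n : ℂ) + 1‖ = (n : ℝ) + 1 := by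
    have := Complex.norm_natCast (n + 1)
    push_cast at this; exact this
  rw [_root_.dco, norm_mul, hn]
  calc ((n : ℝ) + 1) * ‖f (n + 1)‖ * r ^ n * (s - r)
      = ‖f (n + 1)‖ * (((n : ℝ) + 1) * r ^ n * (s - r)) := by ring
    _ ≤ _ := by gcongr

lemma HSum.summable {f : ℕ → ℂ} (h : HSum f) {z : ℂ} (hz : ‖z‖ < 1) :
    Summable fun n => f n * z ^ n := by
  apply Summable.of_norm
  simpa [norm_mul, norm_pow] using h ‖z‖ (norm_nonneg _) hz

lemma shift {f : ℕ → ℂ} (h : HSum f) {z : ℂ} (hz : ‖z‖ < 1) :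
    HasSum (fun n : ℕ => (n : ℂ) * f n * z ^ n) (z * ∑' n, dco f n * z ^ n) := by
  have h1 := (h.dco.summable hz).hasSum.mul_left z
  rw [← hasSum_nat_add_iff' 1]
  simp only [Finset.range_one, Finset.sum_singleton, Nat.cast_zero, zero_mul, sub_zero]
  refine h1.congr_fun ?_ |> id
  intro n; simp only [dco]; push_cast; ring

lemma hasDeriv {f : ℕ → ℂ} (h : HSum f) {z : ℂ} (hz : ‖z‖ < 1) :
    HasDerivAt (fun z => ∑' n, f n * z ^ n) (∑' n, dco f n * z ^ n) z := by
  obtain ⟨r, hr, hr1⟩ := exists_between hz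
  have hr0 : 0 ≤ r := (norm_nonneg _).trans hr.le
  have hu : Summable fun n : ℕ => ‖f n‖ * ((n : ℝ) * r ^ (n - 1)) := by
    rw [← summable_nat_add_iff 1]
    refine (h.dco r hr0 hr1).congr fun n => ?_
    have hn : ‖(n : ℂ) + 1‖ = (n : ℝ) + 1 := by
      have := Complex.norm_natCast (n + 1)
      push_cast at this; exact this
    simp only [dco, norm_mul, hn, Nat.add_sub_cancel]; push_cast; ring
  have key := hasDerivAt_tsum_of_isPreconnected (𝕜 := ℂ) (g := fun n z => f n * z ^ n)
    (g' := fun n z => f n * ((n : ℂ) * z ^ (n - 1))) (y₀ := z) (y := z) hu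
    (Metric.isOpen_ball (x := (0 : ℂ)) (ε := r))
    (convex_ball _ _).isPreconnected
    (fun n y _ => (hasDerivAt_pow n y).const_mul (f n))
    (fun n y hy => by
      have : ‖y‖ ≤ r := by simpa using (Metric.mem_ball.1 hy).le
      rw [norm_mul, norm_mul, norm_pow, Complex.norm_natCast]
      gcongr) (by simpa using hr) (h.summable hz) (by simpa using hr)
  refine key.congr_deriv ?_
  rw [Summable.tsum_eq_zero_add]
  · simp [dco]
    refine tsum_congr fun n => by ring
  · refine Summable.of_norm_bounded hu fun n => ?_
    rw [norm_mul, norm_mul, norm_pow, Complex.norm_natCast]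
    gcongr

/-- hypergeometric coefficients -/
noncomputable def hco (a b c : ℂ) (n : ℕ) : ℂ :=
  (ascPochhammer ℂ n).eval a * (ascPochhammer ℂ n).eval b /
      ((ascPochhammer ℂ n).eval c * (n.factorial : ℂ))

lemma hco_rec (a b c : ℂ) (hc : ∀ n : ℕ, c + n ≠ 0) (n : ℕ) :
    (c + n) * dco (hco a b c) n = (a + n) * (b + n) * hco a b c n := by
  have h0 : (ascPochhammer ℂ n).eval c ≠ 0 := by
    induction n with
    | zero => simp
    | succ n ih => rw [ascPochhammer_succ_eval]; exact mul_ne_zero ih (hc n)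
  have h1 := hc n
  have h2 : (n.factorial : ℂ) ≠ 0 := by exact_mod_cast n.factorial_ne_zero
  have h3 : (n : ℂ) + 1 ≠ 0 := by exact_mod_cast n.succ_ne_zero
  simp only [dco, hco, ascPochhammer_succ_eval, Nat.factorial_succ]
  push_cast
  field_simp

lemma hco_HSum (a b c : ℂ) (h : ∀ n : ℕ, (n : ℂ) ≠ -a ∧ (n : ℂ) ≠ -b ∧ (n : ℂ) ≠ -c) :
    HSum (hco a b c) := by
  intro r hr hr1
  lift r to NNReal using hr
  have hR := ordinaryHypergeometricSeries_radius_eq_one ℂ a b c h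
  have := (ordinaryHypergeometricSeries ℂ a b c).summable_norm_mul_pow (r := r)
    (by rw [hR]; exact_mod_cast hr1)
  refine this.congr fun n => ?_
  congr 1
  rw [ordinaryHypergeometricSeries, FormalMultilinearSeries.ofScalars_norm]
  simp only [ordinaryHypergeometricCoefficient, hco]
  congr 1
  rw [div_eq_mul_inv, mul_inv]; ring

lemma hyp_ode (a b c : ℂ) (h : ∀ n : ℕ, (n : ℂ) ≠ -a ∧ (n : ℂ) ≠ -b ∧ (n : ℂ) ≠ -c)
    {z : ℂ} (hz : ‖z‖ < 1) :
    z * (1 - z) * (∑' n, dco (dco (hco a b c)) n * z ^ n)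
      + (c - (a + b + 1) * z) * (∑' n, dco (hco a b c) n * z ^ n)
      - a * b * (∑' n, hco a b c n * z ^ n) = 0 := by
  have H := hco_HSum a b c h
  set f := hco a b c with hf
  have s1 := shift H hz
  have s2 := shift H.dco hz
  have t0 := (H.summable hz).hasSum
  have t1 := (H.dco.summable hz).hasSum
  have s3 : HasSum (fun n : ℕ => (n : ℂ) * ((n : ℂ) - 1) * f n * z ^ n)
      (z * (z * ∑' n, dco (dco f) n * z ^ n)) := by
    rw [← hasSum_nat_add_iff' 1]
    simp only [Finset.range_one, Finset.sum_singleton, Nat.cast_zero, zero_mul, sub_zero]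
    refine (s2.mul_left z).congr_fun ?_ |> id
    intro n; simp only [dco]; push_cast; ring
  have tot := (((s2.add (t1.mul_left c)).sub s3).sub (s1.mul_left (a + b + 1))).sub
    (t0.mul_left (a * b))
  have hz0 : (fun n : ℕ => (n : ℂ) * dco f n * z ^ n + c * (dco f n * z ^ n)
      - (n : ℂ) * ((n : ℂ) - 1) * f n * z ^ n - (a + b + 1) * ((n : ℂ) * f n * z ^ n)
      - a * b * (f n * z ^ n)) = fun _ => 0 := by
    funext n
    have hr := hco_rec a b c (fun n e => (h n).2.2 (by linear_combination e)) n
    rw [← hf] at hr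
    linear_combination z ^ n * hr
  have := tot.unique (by rw [hz0]; exact hasSum_zero)
  linear_combination this

theorem test (k : ℝ) (hk : 0 < k) (μ : ℕ) :
    (∀ x > 0, DifferentiableAt ℝ (fun t : ℝ => legE k μ t) x) ∧
    (∀ x > 0, DifferentiableAt ℝ (deriv fun t : ℝ => legE k μ t) x) ∧
    ∀ x > 0,
      -(deriv (deriv fun t : ℝ => legE k μ t) x) +
          ((((μ : ℝ) ^ 2 - 1 / 4) / Real.sinh x ^ 2 : ℝ) : ℂ) * legE k μ x =
        ((k ^ 2 : ℝ) : ℂ) * legE k μ x := by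
  set a : ℂ := ((μ : ℂ) + 1 / 2 + Complex.I * k) / 2 with ha
  set b : ℂ := ((μ : ℂ) + 3 / 2 + Complex.I * k) / 2 with hb
  set c : ℂ := (μ : ℂ) + 1 with hc
  have h : ∀ n : ℕ, (n : ℂ) ≠ -a ∧ (n : ℂ) ≠ -b ∧ (n : ℂ) ≠ -c := by
    intro n
    have hn : (0 : ℝ) ≤ n := n.cast_nonneg
    have hm : (0 : ℝ) ≤ μ := μ.cast_nonneg
    refine ⟨fun e => ?_, fun e => ?_, fun e => ?_⟩
    · have := congrArg Complex.im e
      simp [ha] at this; linarith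
    · have := congrArg Complex.im e
      simp [hb] at this; linarith
    · have := congrArg Complex.re e
      simp [hc] at this; linarith
  have H := hco_HSum a b c h
  set C : ℂ := (2 : ℂ) ^ (-(μ : ℂ)) * ((μ.factorial : ℂ))⁻¹ with hC
  let F : ℂ → ℂ := fun z => ∑' n, hco a b c n * z ^ n
  let F1 : ℂ → ℂ := fun z => ∑' n, dco (hco a b c) n * z ^ n
  let F2 : ℂ → ℂ := fun z => ∑' n, dco (dco (hco a b c)) n * z ^ n
  let T : ℝ → ℂ := fun x => (Real.tanh x : ℂ)
  let P : ℝ → ℂ := fun x => ((Real.tanh x ^ ((μ : ℝ) + 1 / 2) : ℝ) : ℂ)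
  let Q : ℝ → ℂ := fun x => (Real.cosh x : ℂ) ^ (-(Complex.I * k))
  have hE : (fun t : ℝ => legE k μ t) = fun x => C * (P x * Q x * F (T x ^ 2)) := by
    funext x
    simp only [legE, hyp2F1, P, Q, F, T, hC, hco]
    push_cast
    ring
  have htd (x : ℝ) : HasDerivAt Real.tanh (1 - Real.tanh x ^ 2) x := by
    have h0 := (Real.cosh_pos x).ne'
    have h1 := (Real.hasDerivAt_sinh x).div (Real.hasDerivAt_cosh x) h0
    have e : Real.tanh = Real.sinh / Real.cosh := by
      funext y; simp [Real.tanh_eq_sinh_div_cosh]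
    rw [e]
    refine h1.congr_deriv ?_
    simp only [Pi.div_apply]
    field_simp
  have htpos (x : ℝ) (hx : 0 < x) : 0 < Real.tanh x := by
    rw [Real.tanh_eq_sinh_div_cosh]
    exact div_pos (Real.sinh_pos_iff.2 hx) (Real.cosh_pos x)
  have hT (x : ℝ) : HasDerivAt T (1 - T x ^ 2) x := by
    have := (htd x).ofReal_comp
    simpa [T] using this
  have hTn (x : ℝ) : ‖T x ^ 2‖ < 1 := by
    have h0 := Real.cosh_pos x
    have h1 := Real.cosh_sq x
    have : Real.tanh x ^ 2 < 1 := by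
      rw [Real.tanh_eq_sinh_div_cosh, div_pow, div_lt_one (by positivity)]; linarith
    have e : T x ^ 2 = ((Real.tanh x ^ 2 : ℝ) : ℂ) := by simp [T]
    rw [e, Complex.norm_real, Real.norm_eq_abs, abs_of_nonneg (sq_nonneg _)]
    exact this
  have hP (x : ℝ) (hx : 0 < x) :
      HasDerivAt P (((μ : ℂ) + 1 / 2) * (1 - T x ^ 2) / T x * P x) x := by
    have h0 := htpos x hx
    have := ((htd x).rpow_const (p := (μ : ℝ) + 1 / 2) (Or.inl h0.ne')).ofReal_comp
    refine this.congr_deriv ?_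
    simp only [P, T]
    rw [Real.rpow_sub_one h0.ne']
    push_cast
    ring
  have hQ (x : ℝ) : HasDerivAt Q (-(Complex.I * k) * T x * Q x) x := by
    have h0 := Real.cosh_pos x
    have h0' : (Real.cosh x : ℂ) ≠ 0 := by exact_mod_cast h0.ne'
    have h1 := (Real.hasDerivAt_cosh x).ofReal_comp
    have := (hasDerivAt_id (Real.cosh x : ℂ)).cpow_const (c := -(Complex.I * k))
      (Or.inl (by simpa using h0))
    have h2 := HasDerivAt.comp x this h1
    refine h2.congr_deriv ?_
    simp only [Q, T, id, Complex.cpow_sub _ _ h0', Complex.cpow_one, Real.tanh_eq_sinh_div_cosh]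
    push_cast
    field_simp
  have hT2 (x : ℝ) : HasDerivAt (fun x => T x ^ 2) (2 * T x * (1 - T x ^ 2)) x := by
    exact ((hT x).pow 2).congr_deriv (by simp)
  have hF (x : ℝ) : HasDerivAt (fun x => F (T x ^ 2)) (F1 (T x ^ 2) * (2 * T x * (1 - T x ^ 2))) x :=
    HasDerivAt.comp x (hasDeriv H (hTn x)) (hT2 x)
  have hF1 (x : ℝ) :
      HasDerivAt (fun x => F1 (T x ^ 2)) (F2 (T x ^ 2) * (2 * T x * (1 - T x ^ 2))) x :=
    HasDerivAt.comp x (hasDeriv H.dco (hTn x)) (hT2 x)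
  have hT0 (x : ℝ) (hx : 0 < x) : T x ≠ 0 := by
    exact Complex.ofReal_ne_zero.2 (htpos x hx).ne'
  let G : ℝ → ℂ := fun x => C * (P x * Q x * ((((μ : ℂ) + 1 / 2) * ((T x)⁻¹ - T x)
      - Complex.I * k * T x) * F (T x ^ 2) + 2 * (T x * (1 - T x ^ 2)) * F1 (T x ^ 2)))
  have hD1 (x : ℝ) (hx : 0 < x) : HasDerivAt (fun t : ℝ => legE k μ t) (G x) x := by
    rw [hE]
    refine ((((hP x hx).mul (hQ x)).mul (hF x)).const_mul C).congr_deriv ?_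
    have := hT0 x hx
    simp only [G, Pi.mul_apply]
    field_simp
    ring
  have hD2 (x : ℝ) (hx : 0 < x) : HasDerivAt G
      ((((μ : ℂ) ^ 2 - 1 / 4) * (1 - T x ^ 2) / T x ^ 2 - (k : ℂ) ^ 2)
        * (C * (P x * Q x * F (T x ^ 2)))) x := by
    have h0 := hT0 x hx
    have hA := ((((hT x).inv h0).sub (hT x)).const_mul ((μ : ℂ) + 1 / 2)).sub
      ((hT x).const_mul (Complex.I * k))
    have hB := ((hT x).mul ((hT2 x).const_sub 1)).const_mul (2 : ℂ)
    have := (((hP x hx).mul (hQ x)).mul ((hA.mul (hF x)).add (hB.mul (hF1 x)))).const_mul C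
    refine this.congr_deriv ?_
    have ode := hyp_ode a b c h (hTn x)
    change _ * _ * F2 (T x ^ 2) + _ * F1 (T x ^ 2) - _ * F (T x ^ 2) = 0 at ode
    simp only [Pi.mul_apply, Pi.sub_apply, Pi.add_apply, Pi.inv_apply]
    rw [ha, hb, hc] at ode
    generalize F2 (T x ^ 2) = f2 at *
    generalize F1 (T x ^ 2) = f1 at *
    generalize F (T x ^ 2) = f at *
    generalize P x = p at *
    generalize Q x = q at *
    generalize T x = t at *
    have hK : (k : ℂ) ^ 2 = -(Complex.I * k) ^ 2 := by
      rw [mul_pow, Complex.I_sq]; ring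
    rw [hK]
    generalize Complex.I * (k : ℂ) = K at *
    rw [← sub_eq_zero]
    refine Eq.trans ?_ (mul_eq_zero_of_right (4 * (1 - t ^ 2) * C * p * q) ode)
    field_simp
    ring
  have hev (x : ℝ) (hx : 0 < x) : (deriv fun t : ℝ => legE k μ t) =ᶠ[nhds x] G := by
    filter_upwards [lt_mem_nhds hx] with y hy using (hD1 y hy).deriv
  have hDD (x : ℝ) (hx : 0 < x) := (hD2 x hx).congr_of_eventuallyEq (hev x hx)
  refine ⟨fun x hx => (hD1 x hx).differentiableAt, fun x hx => (hDD x hx).differentiableAt,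
    fun x hx => ?_⟩
  rw [(hDD x hx).deriv, show legE k μ x = _ from congrFun hE x]
  have hs : (((μ : ℝ) ^ 2 - 1 / 4) / Real.sinh x ^ 2 : ℝ)
      = ((μ : ℝ) ^ 2 - 1 / 4) * (1 - Real.tanh x ^ 2) / Real.tanh x ^ 2 := by
    have h0 := (Real.cosh_pos x).ne'
    have h1 := (Real.sinh_pos_iff.2 hx).ne'
    have h2 := Real.cosh_sq x
    rw [Real.tanh_eq_sinh_div_cosh]
    field_simp
    rw [h2]; ring
  rw [hs]
  simp only [T]
  push_cast
  ring
end

section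
/- Let μ ≥ 0 be an integer, x > 0 real, and k ≥ 1 real (if μ ≥ 1, any real k > 0 is allowed). Then ‖Γ(1/2+μ+ik)/Γ(1/2−μ+ik)‖·‖E(k,μ,x)‖ ≤ (sinh x)^{μ+1/2} / ‖Γ(−1/2−μ+ik)‖. (Equivalently, |√(sinh x)·𝖯^{μ}_{ik−1/2}(cosh x)| ≤ (sinh x)^{μ+1/2}/|Γ(ik − 1/2 − μ)|.) -/
open Real

lemma aux_binomC (a z : ℂ) (hz : ‖z‖ < 1) :
    HasSum (fun n : ℕ => (ascPochhammer ℂ n).eval a / (n.factorial : ℂ) * z ^ n)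
      ((1 - z) ^ (-a)) := by
  have h := (Complex.one_div_one_sub_cpow_hasFPowerSeriesOnBall_zero a).hasSum (y := z)
    (by simpa [enorm_eq_nnnorm, ← NNReal.coe_lt_coe] using hz)
  simp only [zero_add, one_div, ← Complex.cpow_neg] at h
  refine Eq.mp (congrArg (fun f => HasSum f _) (funext fun n => ?_)) h
  have h2 : Ring.choose (a + n - 1) n = (ascPochhammer ℂ n).eval a / (n.factorial : ℂ) := by
    rw [Ring.choose, show a + n - 1 - n + 1 = a by ring, eq_div_iff (by exact_mod_cast n.factorial_ne_zero),
      mul_comm, ← nsmul_eq_mul, Ring.factorial_nsmul_multichoose_eq_ascPochhammer,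
      Polynomial.ascPochhammer_smeval_eq_eval]
  simp [h2, FormalMultilinearSeries.ofScalars, mul_comm]

lemma aux_binomR (b z : ℝ) (hz : |z| < 1) :
    HasSum (fun n : ℕ => (ascPochhammer ℝ n).eval b / (n.factorial : ℝ) * z ^ n)
      ((1 - z) ^ (-b)) := by
  have h := (Real.one_div_one_sub_rpow_hasFPowerSeriesOnBall_zero b).hasSum (y := z)
    (by simpa [enorm_eq_nnnorm, ← NNReal.coe_lt_coe] using hz)
  have hp : 0 ≤ 1 - z := by linarith [le_abs_self z]
  simp only [zero_add, one_div, ← Real.rpow_neg hp] at h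
  refine Eq.mp (congrArg (fun f => HasSum f _) (funext fun n => ?_)) h
  have h2 : Ring.choose (b + n - 1) n = (ascPochhammer ℝ n).eval b / (n.factorial : ℝ) := by
    rw [Ring.choose, show b + n - 1 - n + 1 = b by ring, eq_div_iff (by exact_mod_cast n.factorial_ne_zero),
      mul_comm, ← nsmul_eq_mul, Ring.factorial_nsmul_multichoose_eq_ascPochhammer,
      Polynomial.ascPochhammer_smeval_eq_eval]
  simp [h2, FormalMultilinearSeries.ofScalars, mul_comm]

lemma aux_asc_cast (b : ℝ) (n : ℕ) :
    (ascPochhammer ℂ n).eval (b : ℂ) = (((ascPochhammer ℝ n).eval b : ℝ) : ℂ) := by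
  induction n with
  | zero => simp
  | succ n ih => rw [ascPochhammer_succ_eval, ascPochhammer_succ_eval, ih]; push_cast; ring

lemma aux_dup (a : ℂ) (n : ℕ) :
    (ascPochhammer ℂ (2 * n)).eval a =
      4 ^ n * ((ascPochhammer ℂ n).eval (a / 2) * (ascPochhammer ℂ n).eval ((a + 1) / 2)) := by
  induction n with
  | zero => simp
  | succ n ih =>
    rw [show 2 * (n + 1) = 2 * n + 1 + 1 by ring]
    simp only [ascPochhammer_succ_eval, ih]
    push_cast
    ring

/-- The moments of `cos` against `sin ^ (2 μ)`. -/
noncomputable def auxJ (μ n : ℕ) : ℝ := ∫ θ in (0 : ℝ)..π, Real.cos θ ^ n * Real.sin θ ^ (2 * μ)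

lemma auxJ_rec (μ n : ℕ) : ((n : ℝ) + 2 + 2 * μ) * auxJ μ (n + 2) = (n + 1) * auxJ μ n := by
  have hd : ∀ θ ∈ Set.uIcc (0 : ℝ) π,
      HasDerivAt (fun θ : ℝ => Real.cos θ ^ (n + 1) * Real.sin θ ^ (2 * μ + 1))
        (((n : ℝ) + 2 + 2 * μ) * (Real.cos θ ^ (n + 2) * Real.sin θ ^ (2 * μ)) -
          (n + 1) * (Real.cos θ ^ n * Real.sin θ ^ (2 * μ))) θ := by
    intro θ _
    have h := ((Real.hasDerivAt_cos θ).pow (n + 1)).mul ((Real.hasDerivAt_sin θ).pow (2 * μ + 1))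
    refine h.congr_deriv ?_
    simp only [Pi.pow_apply, Nat.add_sub_cancel]
    push_cast
    have hs : Real.sin θ ^ (2 * μ + 1) = Real.sin θ ^ (2 * μ) * Real.sin θ := pow_succ _ _
    have hs2 : Real.sin θ * Real.sin θ = 1 - Real.cos θ ^ 2 := by
      have := Real.sin_sq_add_cos_sq θ; linarith
    rw [hs]
    linear_combination (-(n + 1 : ℝ) * Real.cos θ ^ n * Real.sin θ ^ (2 * μ)) * hs2
  have hI := intervalIntegral.integral_eq_sub_of_hasDerivAt hd
    (Continuous.intervalIntegrable (by fun_prop) _ _)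
  rw [intervalIntegral.integral_sub (Continuous.intervalIntegrable (by fun_prop) _ _)
    (Continuous.intervalIntegrable (by fun_prop) _ _), intervalIntegral.integral_const_mul,
    intervalIntegral.integral_const_mul] at hI
  simp at hI
  unfold auxJ
  linarith

lemma auxJ_one (μ : ℕ) : auxJ μ 1 = 0 := by
  have hd : ∀ θ ∈ Set.uIcc (0 : ℝ) π,
      HasDerivAt (fun θ : ℝ => Real.sin θ ^ (2 * μ + 1))
        ((2 * μ + 1) * (Real.cos θ ^ 1 * Real.sin θ ^ (2 * μ))) θ := by
    intro θ _
    refine ((Real.hasDerivAt_sin θ).pow (2 * μ + 1)).congr_deriv ?_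
    simp only [Nat.add_sub_cancel]
    push_cast
    ring
  have hI := intervalIntegral.integral_eq_sub_of_hasDerivAt hd
    (Continuous.intervalIntegrable (by fun_prop) _ _)
  rw [intervalIntegral.integral_const_mul] at hI
  simp at hI
  unfold auxJ
  rcases hI with h | h
  · exfalso
    have : (0 : ℝ) < 2 * μ + 1 := by positivity
    linarith
  · simpa using h

lemma auxJ_odd (μ n : ℕ) : auxJ μ (2 * n + 1) = 0 := by
  induction n with
  | zero => exact auxJ_one μ
  | succ n ih =>
    have h := auxJ_rec μ (2 * n + 1)
    rw [ih, mul_zero] at h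
    rcases mul_eq_zero.mp h with h | h
    · exfalso
      have : (0 : ℝ) < ((2 * n + 1 : ℕ) : ℝ) + 2 + 2 * μ := by positivity
      linarith
    · exact h

lemma auxJ_even (μ n : ℕ) : auxJ μ (2 * n) *
    (4 ^ n * ((ascPochhammer ℝ n).eval ((μ : ℝ) + 1) * n.factorial)) =
      (2 * n).factorial * auxJ μ 0 := by
  induction n with
  | zero => simp
  | succ n ih =>
    have h := auxJ_rec μ (2 * n)
    rw [show 2 * (n + 1) = 2 * n + 2 by ring, Nat.factorial_succ, Nat.factorial_succ (2 * n + 1),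
      Nat.factorial_succ, ascPochhammer_succ_eval]
    push_cast at h ⊢
    linear_combination (2 * (n + 1) * (4 ^ n * ((ascPochhammer ℝ n).eval ((μ : ℝ) + 1) * n.factorial))) * h + (2 * (n + 1) * (2 * n + 1)) * ih

lemma auxJ_pos (μ : ℕ) : 0 < auxJ μ 0 := by
  unfold auxJ
  simpa using integral_sin_pow_pos (2 * μ)

lemma aux_main (a : ℂ) (μ : ℕ) (t : ℝ) (ht0 : 0 ≤ t) (ht : t < 1) :
    (auxJ μ 0 : ℂ) * hyp2F1 (a / 2) ((a + 1) / 2) ((μ : ℂ) + 1) ((t ^ 2 : ℝ) : ℂ) =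
      ∫ θ in (0 : ℝ)..π, ((1 - t * Real.cos θ : ℝ) : ℂ) ^ (-a) * ((Real.sin θ ^ (2 * μ) : ℝ) : ℂ) := by
  have hlim : ∀ θ : ℝ, HasSum (fun n : ℕ => (ascPochhammer ℂ n).eval a / (n.factorial : ℂ) *
      ((t * Real.cos θ : ℝ) : ℂ) ^ n * ((Real.sin θ ^ (2 * μ) : ℝ) : ℂ))
      (((1 - t * Real.cos θ : ℝ) : ℂ) ^ (-a) * ((Real.sin θ ^ (2 * μ) : ℝ) : ℂ)) := by
    intro θ
    have h1 : ‖((t * Real.cos θ : ℝ) : ℂ)‖ < 1 := by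
      rw [Complex.norm_real, Real.norm_eq_abs, abs_mul, abs_of_nonneg ht0]
      have := Real.abs_cos_le_one θ
      nlinarith [abs_nonneg (Real.cos θ)]
    have h2 := (aux_binomC a _ h1).mul_right ((Real.sin θ ^ (2 * μ) : ℝ) : ℂ)
    rwa [← Complex.ofReal_one, ← Complex.ofReal_sub] at h2
  have hsum : Summable fun n : ℕ => ‖(ascPochhammer ℂ n).eval a / (n.factorial : ℂ)‖ * t ^ n := by
    have h1 : ‖(t : ℂ)‖ < 1 := by rwa [Complex.norm_real, Real.norm_eq_abs, abs_of_nonneg ht0]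
    have h2 := (aux_binomC a _ h1).summable.norm
    refine h2.congr fun n => ?_
    rw [norm_mul, norm_pow, Complex.norm_real, Real.norm_eq_abs, abs_of_nonneg ht0]
  have hI := intervalIntegral.hasSum_integral_of_dominated_convergence (μ := MeasureTheory.volume)
    (a := 0) (b := π)
    (F := fun (n : ℕ) (θ : ℝ) => (ascPochhammer ℂ n).eval a / (n.factorial : ℂ) *
      ((t * Real.cos θ : ℝ) : ℂ) ^ n * ((Real.sin θ ^ (2 * μ) : ℝ) : ℂ))
    (fun n _ => ‖(ascPochhammer ℂ n).eval a / (n.factorial : ℂ)‖ * t ^ n)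
    (fun n => Continuous.aestronglyMeasurable (by fun_prop))
    (fun n => Filter.Eventually.of_forall fun θ _ => by
      rw [norm_mul, norm_mul, norm_pow, Complex.norm_real, Complex.norm_real, mul_assoc]
      refine mul_le_mul_of_nonneg_left ?_ (norm_nonneg _)
      rw [norm_mul, mul_pow, norm_pow, Real.norm_eq_abs, Real.norm_eq_abs, Real.norm_eq_abs,
        abs_of_nonneg ht0, mul_assoc]
      refine mul_le_of_le_one_right (by positivity) ?_
      exact mul_le_one₀ (pow_le_one₀ (abs_nonneg _) (Real.abs_cos_le_one θ)) (by positivity)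
        (pow_le_one₀ (abs_nonneg _) (Real.abs_sin_le_one θ)))
    (Filter.Eventually.of_forall fun θ _ => hsum)
    (by simp)
    (Filter.Eventually.of_forall fun θ _ => hlim θ)
  have hterm : ∀ n : ℕ, (∫ θ in (0 : ℝ)..π, (ascPochhammer ℂ n).eval a / (n.factorial : ℂ) *
      ((t * Real.cos θ : ℝ) : ℂ) ^ n * ((Real.sin θ ^ (2 * μ) : ℝ) : ℂ)) =
      (ascPochhammer ℂ n).eval a / (n.factorial : ℂ) * t ^ n * (auxJ μ n : ℂ) := by
    intro n
    unfold auxJ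
    rw [← intervalIntegral.integral_ofReal, ← intervalIntegral.integral_const_mul]
    refine intervalIntegral.integral_congr fun θ _ => ?_
    push_cast
    ring
  simp only [hterm] at hI
  have hinj : Function.Injective (fun n : ℕ => 2 * n) := fun m n h => by simpa using h
  rw [← hinj.hasSum_iff] at hI
  · rw [← hI.tsum_eq, hyp2F1, ← tsum_mul_left]
    refine tsum_congr fun n => ?_
    have he := congrArg (fun r : ℝ => (r : ℂ)) (auxJ_even μ n)
    have hc := aux_asc_cast ((μ : ℝ) + 1) n
    have hpos : (ascPochhammer ℝ n).eval ((μ : ℝ) + 1) ≠ 0 :=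
      (ascPochhammer_pos n _ (by positivity)).ne'
    push_cast at he hc
    simp only [Function.comp, aux_dup, hc]
    have hposC : (((ascPochhammer ℝ n).eval ((μ : ℝ) + 1) : ℝ) : ℂ) ≠ 0 := by exact_mod_cast hpos
    have hf : (n.factorial : ℂ) ≠ 0 := by exact_mod_cast n.factorial_ne_zero
    have hf2 : ((2 * n).factorial : ℂ) ≠ 0 := by exact_mod_cast (2 * n).factorial_ne_zero
    push_cast
    field_simp
    rw [pow_mul]
    linear_combination (-(ascPochhammer ℂ n).eval (a / 2) * (ascPochhammer ℂ n).eval ((a + 1) / 2) * ((t : ℂ) ^ 2) ^ n) * he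
  · intro m hm
    rcases Nat.even_or_odd' m with ⟨j, rfl | rfl⟩
    · exact absurd ⟨j, rfl⟩ hm
    · rw [auxJ_odd]; simp

lemma aux_pos_bound (μ : ℕ) (t : ℝ) (ht0 : 0 ≤ t) (ht : t < 1) :
    ‖hyp2F1 ((((μ : ℝ) + 1 / 2 : ℝ) : ℂ) / 2) (((((μ : ℝ) + 1 / 2 : ℝ) : ℂ) + 1) / 2)
      ((μ : ℂ) + 1) ((t ^ 2 : ℝ) : ℂ)‖ ≤ (1 - t ^ 2) ^ (-(((μ : ℝ) + 1 / 2) / 2)) := by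
  have hb := aux_binomR (((μ : ℝ) + 1 / 2) / 2) (t ^ 2)
    (by rw [abs_of_nonneg (by positivity)]; nlinarith)
  unfold hyp2F1
  refine tsum_of_norm_bounded hb fun n => ?_
  have e1 := aux_asc_cast (((μ : ℝ) + 1 / 2) / 2) n
  have e2 := aux_asc_cast ((((μ : ℝ) + 1 / 2) + 1) / 2) n
  have e3 := aux_asc_cast ((μ : ℝ) + 1) n
  rw [show ((((μ : ℝ) + 1 / 2 : ℝ) : ℂ) / 2) = ((((μ : ℝ) + 1 / 2) / 2 : ℝ) : ℂ) by push_cast; ring,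
    show ((((μ : ℝ) + 1 / 2 : ℝ) : ℂ) + 1) / 2 = (((((μ : ℝ) + 1 / 2) + 1) / 2 : ℝ) : ℂ) by
      push_cast; ring,
    show (μ : ℂ) + 1 = (((μ : ℝ) + 1 : ℝ) : ℂ) by push_cast; ring, e1, e2, e3]
  have p1 := ascPochhammer_pos n (((μ : ℝ) + 1 / 2) / 2) (by positivity)
  have p2 := ascPochhammer_pos n ((((μ : ℝ) + 1 / 2) + 1) / 2) (by positivity)
  have p3 := ascPochhammer_pos n ((μ : ℝ) + 1) (by positivity)
  have hle : (ascPochhammer ℝ n).eval ((((μ : ℝ) + 1 / 2) + 1) / 2) ≤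
      (ascPochhammer ℝ n).eval ((μ : ℝ) + 1) := by
    clear e1 e2 e3 p1 p2 p3
    induction n with
    | zero => simp
    | succ n ih =>
      rw [ascPochhammer_succ_eval, ascPochhammer_succ_eval]
      have := ascPochhammer_pos n ((μ : ℝ) + 1) (by positivity)
      have hμ : (0 : ℝ) ≤ μ := by positivity
      exact mul_le_mul ih (by linarith) (by positivity) this.le
  have hf : (0 : ℝ) < n.factorial := by exact_mod_cast n.factorial_pos
  rw [← Complex.ofReal_natCast, ← Complex.ofReal_mul, ← Complex.ofReal_mul, ← Complex.ofReal_div,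
    ← Complex.ofReal_pow, ← Complex.ofReal_mul, Complex.norm_real, Real.norm_eq_abs,
    abs_of_nonneg (by positivity)]
  refine mul_le_mul_of_nonneg_right ?_ (by positivity)
  rw [div_le_div_iff₀ (by positivity) hf]
  have := mul_le_mul_of_nonneg_left hle (mul_pos p1 hf).le
  linarith

lemma aux_hyp_bound (μ : ℕ) (k t : ℝ) (ht0 : 0 ≤ t) (ht : t < 1) :
    ‖hyp2F1 (((μ : ℂ) + 1 / 2 + Complex.I * k) / 2) (((μ : ℂ) + 3 / 2 + Complex.I * k) / 2)
      ((μ : ℂ) + 1) ((t ^ 2 : ℝ) : ℂ)‖ ≤ (1 - t ^ 2) ^ (-(((μ : ℝ) + 1 / 2) / 2)) := by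
  refine le_trans ?_ (aux_pos_bound μ t ht0 ht)
  have hJ := auxJ_pos μ
  refine le_of_mul_le_mul_left ?_ hJ
  have hp : ∀ θ : ℝ, 0 < 1 - t * Real.cos θ := by
    intro θ
    nlinarith [Real.cos_le_one θ, Real.neg_one_le_cos θ]
  have hn : ∀ z : ℂ, auxJ μ 0 * ‖z‖ = ‖(auxJ μ 0 : ℂ) * z‖ := by
    intro z
    rw [norm_mul, Complex.norm_real, Real.norm_eq_abs, abs_of_pos hJ]
  have hR : (∫ θ in (0 : ℝ)..π, ((1 - t * Real.cos θ : ℝ) : ℂ) ^ (-(((μ : ℝ) + 1 / 2 : ℝ) : ℂ)) *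
      ((Real.sin θ ^ (2 * μ) : ℝ) : ℂ)) = ((∫ θ in (0 : ℝ)..π,
        (1 - t * Real.cos θ) ^ (-((μ : ℝ) + 1 / 2)) * Real.sin θ ^ (2 * μ) : ℝ) : ℂ) := by
    rw [← intervalIntegral.integral_ofReal]
    refine intervalIntegral.integral_congr fun θ _ => ?_
    rw [Complex.ofReal_mul, Complex.ofReal_cpow (hp θ).le]
    push_cast
    rfl
  rw [show ((μ : ℂ) + 3 / 2 + Complex.I * k) = ((μ : ℂ) + 1 / 2 + Complex.I * k) + 1 by ring,
    hn, hn, aux_main _ μ t ht0 ht, aux_main _ μ t ht0 ht, hR, Complex.norm_real, Real.norm_eq_abs]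
  refine le_trans ?_ (le_abs_self _)
  refine intervalIntegral.norm_integral_le_of_norm_le Real.pi_pos.le
    (Filter.Eventually.of_forall fun θ _ => ?_) ?_
  · rw [norm_mul, Complex.norm_cpow_eq_rpow_re_of_pos (hp θ), Complex.norm_real, Real.norm_eq_abs,
      abs_of_nonneg ((even_two_mul μ).pow_nonneg _)]
    simp
  · refine Continuous.intervalIntegrable ?_ _ _
    refine Continuous.mul (Continuous.rpow_const (by fun_prop) fun θ => Or.inl (hp θ).ne') (by fun_prop)

lemma aux_legE (μ : ℕ) (x k : ℝ) (hx : 0 < x) :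
    ‖legE k μ x‖ ≤ ((2 : ℝ) ^ μ * μ.factorial)⁻¹ * Real.sinh x ^ ((μ : ℝ) + 1 / 2) := by
  have hc := Real.cosh_pos x
  have hs : 0 < Real.sinh x := Real.sinh_pos_iff.mpr hx
  have htt : Real.tanh x = Real.sinh x / Real.cosh x := Real.tanh_eq_sinh_div_cosh x
  have ht0 : 0 < Real.tanh x := by rw [htt]; positivity
  have ht1 : Real.tanh x < 1 := Real.tanh_lt_one x
  have hb := aux_hyp_bound μ k (Real.tanh x) ht0.le ht1
  have h1 : 1 - Real.tanh x ^ 2 = Real.cosh x ^ (-2 : ℝ) := by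
    rw [Real.rpow_neg hc.le, htt]
    have := Real.cosh_sq x
    norm_cast
    field_simp
    linarith
  have h2 : (1 - Real.tanh x ^ 2) ^ (-(((μ : ℝ) + 1 / 2) / 2)) = Real.cosh x ^ ((μ : ℝ) + 1 / 2) := by
    rw [h1, ← Real.rpow_mul hc.le]
    congr 1
    ring
  rw [h2] at hb
  unfold legE
  rw [norm_mul, norm_mul, norm_mul, norm_mul, Complex.norm_cpow_eq_rpow_re_of_pos hc]
  have e1 : ‖(2 : ℂ) ^ (-(μ : ℂ))‖ = ((2 : ℝ) ^ μ)⁻¹ := by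
    rw [Complex.cpow_neg, Complex.cpow_natCast]; simp
  have e2 : Real.cosh x ^ (-(Complex.I * k)).re = 1 := by simp
  have e3 : ‖((μ.factorial : ℂ))⁻¹‖ = (μ.factorial : ℝ)⁻¹ := by simp
  have e4 : ‖((Real.tanh x ^ ((μ : ℝ) + 1 / 2) : ℝ) : ℂ)‖ = Real.tanh x ^ ((μ : ℝ) + 1 / 2) := by
    rw [Complex.norm_real, Real.norm_eq_abs, abs_of_nonneg (by positivity)]
  rw [e1, e2, e3, e4]
  have e5 : Real.sinh x ^ ((μ : ℝ) + 1 / 2) =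
      Real.tanh x ^ ((μ : ℝ) + 1 / 2) * Real.cosh x ^ ((μ : ℝ) + 1 / 2) := by
    rw [← Real.mul_rpow ht0.le hc.le, htt, div_mul_cancel₀ _ hc.ne']
  rw [e5, mul_inv]
  have := mul_le_mul_of_nonneg_left hb (a := ((2 : ℝ) ^ μ)⁻¹ * (μ.factorial : ℝ)⁻¹ *
    Real.tanh x ^ ((μ : ℝ) + 1 / 2)) (by positivity)
  linarith

lemma aux_norm_Gamma (s : ℂ) (hs : 0 < s.re) : ‖Complex.Gamma s‖ ≤ Real.Gamma s.re := by
  rw [Complex.Gamma_eq_integral hs, Real.Gamma_eq_integral hs, Complex.GammaIntegral]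
  refine MeasureTheory.norm_integral_le_of_norm_le (Real.GammaIntegral_convergent hs) ?_
  refine (MeasureTheory.ae_restrict_iff' measurableSet_Ioi).mpr (Filter.Eventually.of_forall ?_)
  intro y hy
  rw [norm_mul, Complex.norm_cpow_eq_rpow_re_of_pos hy, Complex.norm_real, Real.norm_eq_abs,
    abs_of_pos (Real.exp_pos _)]
  simp

lemma aux_Gamma_le (μ : ℕ) : Real.Gamma (1 / 2 + μ) ≤ 2 * μ.factorial := by
  induction μ with
  | zero =>
    simp only [Nat.cast_zero, add_zero, Nat.factorial_zero, Nat.cast_one, mul_one]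
    rw [Real.Gamma_one_half_eq, Real.sqrt_le_left (by norm_num)]
    linarith [Real.pi_lt_four]
  | succ n ih =>
    have h0 : (0 : ℝ) < 1 / 2 + n := by positivity
    rw [Nat.cast_succ, ← add_assoc, Real.Gamma_add_one h0.ne', Nat.factorial_succ]
    push_cast
    have := mul_le_mul (show (1 / 2 + n : ℝ) ≤ n + 1 by linarith) ih (Real.Gamma_pos_of_pos h0).le
      (by positivity)
    linarith

lemma aux_Gamma_key (μ : ℕ) (k : ℝ) (h : 1 ≤ k ∨ 1 ≤ μ) :
    ‖Complex.Gamma (1 / 2 + μ + Complex.I * k)‖ ≤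
      ‖-(1 / 2 : ℂ) - μ + Complex.I * k‖ * ((2 : ℝ) ^ μ * μ.factorial) := by
  rcases Nat.eq_zero_or_pos μ with rfl | hμ
  · have hk : 1 ≤ k := by rcases h with h | h; exacts [h, absurd h (by norm_num)]
    simp only [Nat.cast_zero, add_zero, sub_zero, pow_zero, Nat.factorial_zero, Nat.cast_one, mul_one]
    have i1 : 1 ≤ ‖(1 / 2 : ℂ) + Complex.I * k‖ := by
      have := Complex.abs_im_le_norm ((1 / 2 : ℂ) + Complex.I * k)
      simp at this
      have h2 := le_abs_self k
      simp
      linarith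
    have i2 : 1 ≤ ‖-(1 / 2 : ℂ) + Complex.I * k‖ := by
      have := Complex.abs_im_le_norm (-(1 / 2 : ℂ) + Complex.I * k)
      simp at this
      have h2 := le_abs_self k
      simp
      linarith
    have hne : (1 / 2 : ℂ) + Complex.I * k ≠ 0 := by
      intro h0; rw [h0] at i1; simp at i1; linarith
    have hg := aux_norm_Gamma ((1 / 2 : ℂ) + Complex.I * k + 1) (by simp; norm_num)
    rw [Complex.Gamma_add_one _ hne, norm_mul] at hg
    have hre : ((1 / 2 : ℂ) + Complex.I * k + 1).re = 1 / 2 + 1 := by simp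
    rw [hre, Real.Gamma_add_one (by norm_num)] at hg
    have := aux_Gamma_le 0
    simp at this hg
    have h3 : ‖Complex.Gamma (1 / 2 + Complex.I * k)‖ ≤ ‖(1 / 2 : ℂ) + Complex.I * k‖ * ‖Complex.Gamma (1 / 2 + Complex.I * k)‖ :=
      le_mul_of_one_le_left (norm_nonneg _) i1
    simp at h3 i2 ⊢
    linarith
  · have hg := aux_norm_Gamma (1 / 2 + μ + Complex.I * k) (by simp; positivity)
    have hre : (1 / 2 + μ + Complex.I * k : ℂ).re = 1 / 2 + μ := by simp
    rw [hre] at hg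
    have hl := aux_Gamma_le μ
    have i2 : 1 ≤ ‖-(1 / 2 : ℂ) - μ + Complex.I * k‖ := by
      have := Complex.abs_re_le_norm (-(1 / 2 : ℂ) - μ + Complex.I * k)
      have hre2 : (-(1 / 2 : ℂ) - μ + Complex.I * k).re = -(1 / 2 + μ) := by simp; ring
      have h1 : (1 : ℝ) ≤ μ := by exact_mod_cast hμ
      rw [hre2, abs_neg, abs_of_pos (by positivity)] at this
      linarith
    have h2 : (2 : ℝ) ≤ 2 ^ μ := by
      calc (2 : ℝ) = 2 ^ 1 := by norm_num
        _ ≤ 2 ^ μ := pow_le_pow_right₀ (by norm_num) hμ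
    have hf : (0 : ℝ) < μ.factorial := by exact_mod_cast μ.factorial_pos
    calc _ ≤ 2 * (μ.factorial : ℝ) := hg.trans hl
      _ ≤ 2 ^ μ * μ.factorial := by gcongr
      _ ≤ _ := le_mul_of_one_le_left (by positivity) i2

/-- `|√(sinh x) 𝖯^{μ}_{ik-1/2}(cosh x)| ≤ (sinh x)^{μ+1/2} / |Γ(ik - 1/2 - μ)|`
for `k ≥ 1` (or any `k > 0` if `μ ≥ 1`). -/
theorem legendre_pointwise_bound (μ : ℕ) (x k : ℝ) (hx : 0 < x) (hk : 0 < k)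
    (h : 1 ≤ k ∨ 1 ≤ μ) :
    ‖Complex.Gamma (1 / 2 + μ + Complex.I * k) /
        Complex.Gamma (1 / 2 - μ + Complex.I * k)‖ * ‖legE k μ x‖ ≤
      Real.sinh x ^ ((μ : ℝ) + 1 / 2) /
        ‖Complex.Gamma (-(1 / 2) - μ + Complex.I * k)‖ := by
  have hs : 0 < Real.sinh x := Real.sinh_pos_iff.mpr hx
  have hw0 : ∀ m : ℕ, (-(1 / 2 : ℂ) - μ + Complex.I * k) ≠ -m := by
    intro m hm
    have := congrArg Complex.im hm
    simp at this
    linarith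
  have hG : Complex.Gamma (-(1 / 2) - μ + Complex.I * k) ≠ 0 := Complex.Gamma_ne_zero hw0
  have hw : (-(1 / 2 : ℂ) - μ + Complex.I * k) ≠ 0 := by simpa using hw0 0
  rw [show (1 / 2 - μ + Complex.I * k : ℂ) = (-(1 / 2) - μ + Complex.I * k) + 1 by ring,
    Complex.Gamma_add_one _ hw, norm_div, norm_mul]
  have hE := aux_legE μ x k hx
  have hK := aux_Gamma_key μ k h
  have p1 := norm_pos_iff.mpr hG
  have p2 := norm_pos_iff.mpr hw
  have p3 : (0 : ℝ) < (2 : ℝ) ^ μ * μ.factorial := by positivity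
  have p4 : 0 < Real.sinh x ^ ((μ : ℝ) + 1 / 2) := by positivity
  set A := ‖Complex.Gamma (1 / 2 + μ + Complex.I * k)‖
  set G := ‖Complex.Gamma (-(1 / 2) - μ + Complex.I * k)‖
  set W := ‖-(1 / 2 : ℂ) - μ + Complex.I * k‖
  set C := (2 : ℝ) ^ μ * μ.factorial
  set S := Real.sinh x ^ ((μ : ℝ) + 1 / 2)
  calc A / (W * G) * ‖legE k μ x‖ ≤ (W * C) / (W * G) * (C⁻¹ * S) := by gcongr
    _ = S / G := by field_simp
end

section
/- For every real z with 0 ≤ z < 1 there exists a constant C_z > 0, depending only on z, such that for all integers μ ≥ 0 and all real k > 0: 2^{−μ}·‖₂F₁((μ+1/2+ik)/2, (μ+3/2+ik)/2, μ+1; z)‖ ≤ C_z·√(cosh k). -/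
open Real

theorem poch_hasSum (s x : ℂ) (hx : ‖x‖ < 1) :
    HasSum (fun n : ℕ => (ascPochhammer ℂ n).eval s / (n.factorial : ℂ) * x ^ n) ((1 - x) ^ (-s)) := by
  have h := (Complex.one_div_one_sub_cpow_hasFPowerSeriesOnBall_zero s).hasSum (y := x) (by
    rw [Metric.mem_eball, edist_zero_right, ← ofReal_norm, ← ENNReal.ofReal_one]
    exact (ENNReal.ofReal_lt_ofReal_iff one_pos).2 hx)
  simp only [FormalMultilinearSeries.ofScalars_apply_eq, zero_add] at h
  have e1 : (1 - x) ^ (-s) = 1 / (1 - x) ^ s := by rw [Complex.cpow_neg, one_div]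
  rw [e1]
  refine (congrArg (fun f : ℕ → ℂ => HasSum f (1 / (1 - x) ^ s)) ?_).mpr h
  · funext n
    have := Ring.factorial_nsmul_multichoose_eq_ascPochhammer s n
    rw [Polynomial.ascPochhammer_smeval_eq_eval] at this
    have h2 : Ring.choose (s + n - 1) n = Ring.multichoose s n := by
      rw [Ring.choose]; congr 1; ring
    rw [h2, ← this]
    have : (n.factorial : ℂ) ≠ 0 := by exact_mod_cast n.factorial_ne_zero
    rw [nsmul_eq_mul, smul_eq_mul]; field_simp

theorem poch_summable_norm (s : ℂ) (A : ℝ) (hA0 : 0 ≤ A) (hA : A < 1) :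
    Summable (fun n : ℕ => ‖(ascPochhammer ℂ n).eval s / (n.factorial : ℂ)‖ * A ^ n) := by
  have h := (poch_hasSum s (A : ℂ) (by simpa [abs_of_nonneg hA0] using hA)).summable.norm
  simpa [abs_of_nonneg hA0] using h

theorem poch_split (s : ℂ) (μ n : ℕ) : (ascPochhammer ℂ (2 * n + μ)).eval s =
    (ascPochhammer ℂ μ).eval s * (4 ^ n * ((ascPochhammer ℂ n).eval ((μ + s) / 2) *
      (ascPochhammer ℂ n).eval ((μ + 1 + s) / 2))) := by
  induction n with
  | zero => simp
  | succ n ih =>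
    rw [show 2 * (n + 1) + μ = 2 * n + μ + 1 + 1 by ring]
    simp only [ascPochhammer_succ_eval, ih]
    push_cast; ring

theorem poch_fact (μ n : ℕ) : (ascPochhammer ℂ n).eval ((μ : ℂ) + 1) * (μ.factorial : ℂ) =
    ((n + μ).factorial : ℂ) := by
  induction n with
  | zero => simp
  | succ n ih =>
    rw [show n + 1 + μ = (n + μ) + 1 by ring, Nat.factorial_succ]
    push_cast
    rw [← ih, ascPochhammer_succ_eval]; ring

/-- double-series coefficients -/
noncomputable def aCoef (s : ℂ) (p q : ℝ) (ij : ℕ × ℕ) : ℂ :=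
  (ascPochhammer ℂ (ij.1 + ij.2)).eval s / ((ij.1.factorial : ℂ) * (ij.2.factorial : ℂ)) *
    ((p : ℂ) ^ ij.1 * (q : ℂ) ^ ij.2)

theorem antidiag_sum (s x y : ℂ) (N : ℕ) :
    ∑ ij ∈ Finset.HasAntidiagonal.antidiagonal N, (ascPochhammer ℂ (ij.1 + ij.2)).eval s /
      ((ij.1.factorial : ℂ) * (ij.2.factorial : ℂ)) * (x ^ ij.1 * y ^ ij.2) =
    (ascPochhammer ℂ N).eval s / (N.factorial : ℂ) * (x + y) ^ N := by
  rw [(Commute.all x y).add_pow', Finset.mul_sum]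
  refine Finset.sum_congr rfl fun ij hij => ?_
  obtain ⟨i, j⟩ := ij
  have hij : i + j = N := Finset.HasAntidiagonal.mem_antidiagonal.1 hij
  subst hij
  have h1 : ((i+j).choose i : ℂ) * (i.factorial : ℂ) * (j.factorial : ℂ) = ((i+j).factorial : ℂ) := by
    have := Nat.add_choose_mul_factorial_mul_factorial i j
    rw [← Nat.choose_symm_add] at this
    exact_mod_cast this
  have : (i.factorial : ℂ) ≠ 0 := by exact_mod_cast i.factorial_ne_zero
  have : (j.factorial : ℂ) ≠ 0 := by exact_mod_cast j.factorial_ne_zero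
  have : ((i+j).factorial : ℂ) ≠ 0 := by exact_mod_cast (i+j).factorial_ne_zero
  simp only [nsmul_eq_mul]
  field_simp
  rw [← h1]; ring

theorem aCoef_summable (s : ℂ) (p q : ℝ) (hp : 0 ≤ p) (hq : 0 ≤ q) (hpq : p + q < 1) :
    Summable (fun ij => ‖aCoef s p q ij‖) := by
  rw [← Finset.HasAntidiagonal.sigmaAntidiagonalEquivProd.summable_iff,
    summable_sigma_of_nonneg (by intro x; simp only [Function.comp_apply]; exact norm_nonneg _)]
  refine ⟨fun _ => (hasSum_fintype _).summable, ?_⟩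
  convert poch_summable_norm s (p + q) (by positivity) hpq using 2 with N
  rw [tsum_fintype]
  simp only [Function.comp_def, Finset.HasAntidiagonal.sigmaAntidiagonalEquivProd]
  simp only [Equiv.coe_fn_mk]
  rw [Finset.sum_coe_sort (Finset.HasAntidiagonal.antidiagonal N) (fun ij => ‖aCoef s p q ij‖)]
  rw [(Commute.all p q).add_pow', Finset.mul_sum]
  refine Finset.sum_congr rfl fun ij hij => ?_
  obtain ⟨i, j⟩ := ij
  have hij : i + j = N := Finset.HasAntidiagonal.mem_antidiagonal.1 hij
  subst hij
  have h1 : ((i+j).choose i : ℝ) * (i.factorial : ℝ) * (j.factorial : ℝ) = ((i+j).factorial : ℝ) := by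
    have := Nat.add_choose_mul_factorial_mul_factorial i j
    rw [← Nat.choose_symm_add] at this
    exact_mod_cast this
  have : (i.factorial : ℝ) ≠ 0 := by exact_mod_cast i.factorial_ne_zero
  have : (j.factorial : ℝ) ≠ 0 := by exact_mod_cast j.factorial_ne_zero
  have : ((i+j).factorial : ℝ) ≠ 0 := by exact_mod_cast (i+j).factorial_ne_zero
  simp only [aCoef, nsmul_eq_mul, norm_mul, norm_div, norm_pow, Complex.norm_natCast, Complex.norm_real,
    Real.norm_of_nonneg hp, Real.norm_of_nonneg hq]
  field_simp
  rw [← h1]; ring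

theorem aCoef_hasSum (s : ℂ) (p q : ℝ) (hp : 0 ≤ p) (hq : 0 ≤ q) (hpq : p + q < 1) (u v : ℂ)
    (hu : ‖u‖ = 1) (hv : ‖v‖ = 1) :
    HasSum (fun ij : ℕ × ℕ => aCoef s p q ij * (u ^ ij.1 * v ^ ij.2))
      ((1 - (p * u + q * v)) ^ (-s)) := by
  have hs : Summable (fun ij : ℕ × ℕ => aCoef s p q ij * (u ^ ij.1 * v ^ ij.2)) := by
    refine Summable.of_norm ?_
    simpa [hu, hv] using aCoef_summable s p q hp hq hpq
  have hn : ‖(p * u + q * v : ℂ)‖ < 1 := by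
    refine (norm_add_le _ _).trans_lt ?_
    simpa [hu, hv, abs_of_nonneg hp, abs_of_nonneg hq] using hpq
  have h2 := hs.hasSum
  rw [← Finset.HasAntidiagonal.sigmaAntidiagonalEquivProd.hasSum_iff] at h2
  have h3 := h2.sigma (fun N => hasSum_fintype _)
  have h4 := poch_hasSum s _ hn
  convert hs.hasSum using 1
  refine (h4.unique ?_)
  convert h3 using 2 with N
  rw [← antidiag_sum]
  simp only [Function.comp_def, Finset.HasAntidiagonal.sigmaAntidiagonalEquivProd]
  simp only [Equiv.coe_fn_mk]
  rw [Finset.sum_coe_sort (Finset.HasAntidiagonal.antidiagonal N) (fun ij => aCoef s p q ij * (u ^ ij.1 * v ^ ij.2))]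
  refine Finset.sum_congr rfl fun ij hij => ?_
  simp only [aCoef]; ring

theorem exp_int (m : ℤ) : ∫ θ in (0:ℝ)..2 * π, Complex.exp (m * Complex.I * θ) =
    if m = 0 then 2 * (π : ℂ) else 0 := by
  split_ifs with h
  · simp [h]
  · have hm : (m : ℂ) * Complex.I ≠ 0 := mul_ne_zero (by exact_mod_cast h) Complex.I_ne_zero
    rw [integral_exp_mul_complex hm]
    have : Complex.exp (m * Complex.I * ((2 * π : ℝ) : ℂ)) = 1 := by
      rw [Complex.exp_eq_one_iff]; exact ⟨m, by push_cast; ring⟩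
    rw [this]; simp

theorem coef_bound (s : ℂ) (p q : ℝ) (hp : 0 ≤ p) (hq : 0 ≤ q) (hpq : p + q < 1) (μ : ℕ) (M : ℝ)
    (hM : ∀ θ : ℝ, ‖(1 - (p * Complex.exp (Complex.I * θ) +
      q * Complex.exp (-(Complex.I * θ)))) ^ (-s)‖ ≤ M) :
    ‖∑' n : ℕ, aCoef s p q (n, n + μ)‖ ≤ M := by
  have hu : ∀ θ : ℝ, ‖Complex.exp (Complex.I * θ)‖ = 1 := fun θ => by
    rw [mul_comm, Complex.norm_exp_ofReal_mul_I]
  have hv : ∀ θ : ℝ, ‖Complex.exp (-(Complex.I * θ))‖ = 1 := fun θ => by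
    rw [Complex.exp_neg, norm_inv, hu, inv_one]
  have key := intervalIntegral.hasSum_integral_of_dominated_convergence (μ := MeasureTheory.volume)
    (a := 0) (b := 2 * π)
    (F := fun (ij : ℕ × ℕ) (θ : ℝ) => aCoef s p q ij * (Complex.exp (Complex.I * θ) ^ ij.1 *
      Complex.exp (-(Complex.I * θ)) ^ ij.2) * Complex.exp (Complex.I * θ) ^ μ)
    (f := fun θ => (1 - (p * Complex.exp (Complex.I * θ) + q * Complex.exp (-(Complex.I * θ)))) ^ (-s)
      * Complex.exp (Complex.I * θ) ^ μ)
    (fun ij _ => ‖aCoef s p q ij‖) ?_ ?_ ?_ ?_ ?_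
  rotate_left
  · intro ij
    apply Continuous.aestronglyMeasurable
    fun_prop
  · intro ij
    refine Filter.Eventually.of_forall fun θ _ => ?_
    simp only [norm_mul, norm_pow, hu, hv, one_pow, mul_one, le_refl]
  · exact Filter.Eventually.of_forall fun θ _ => aCoef_summable s p q hp hq hpq
  · exact intervalIntegrable_const
  · exact Filter.Eventually.of_forall fun θ _ =>
      (aCoef_hasSum s p q hp hq hpq _ _ (hu θ) (hv θ)).mul_right _
  have hint : ∀ ij : ℕ × ℕ, ∫ θ in (0:ℝ)..2 * π, aCoef s p q ij *
      (Complex.exp (Complex.I * θ) ^ ij.1 *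
      Complex.exp (-(Complex.I * θ)) ^ ij.2) * Complex.exp (Complex.I * θ) ^ μ =
      if ij.2 = ij.1 + μ then aCoef s p q ij * (2 * π) else 0 := by
    intro ij
    have : ∀ θ : ℝ, aCoef s p q ij * (Complex.exp (Complex.I * θ) ^ ij.1 *
      Complex.exp (-(Complex.I * θ)) ^ ij.2) * Complex.exp (Complex.I * θ) ^ μ =
      aCoef s p q ij * Complex.exp ((((ij.1 : ℤ) + μ - ij.2 : ℤ) : ℂ) * Complex.I * θ) := by
      intro θ
      rw [mul_assoc]
      congr 1
      simp only [← Complex.exp_nat_mul, ← Complex.exp_add]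
      congr 1
      push_cast; ring
    simp_rw [this]
    rw [intervalIntegral.integral_const_mul, exp_int]
    by_cases h : ij.2 = ij.1 + μ
    · rw [if_pos h, if_pos (by omega)]
    · rw [if_neg h, if_neg (by omega), mul_zero]
  simp only [hint] at key
  have hinj : Function.Injective (fun n : ℕ => (n, n + μ)) := fun a b h => by
    simpa using congrArg Prod.fst h
  rw [← hinj.hasSum_iff] at key
  swap
  · intro x hx
    rw [if_neg]
    intro h
    exact hx ⟨x.1, by ext <;> simp [h]⟩
  have key2 := key.tsum_eq
  simp only [Function.comp_def, if_true] at key2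
  rw [tsum_mul_right] at key2
  have hb := intervalIntegral.norm_integral_le_of_norm_le_const (a := 0) (b := 2 * π) (C := M)
    (f := fun θ : ℝ => (1 - (p * Complex.exp (Complex.I * θ) +
      q * Complex.exp (-(Complex.I * θ)))) ^ (-s)
      * Complex.exp (Complex.I * θ) ^ μ) (fun θ _ => by
        rw [norm_mul, norm_pow, hu, one_pow, mul_one]; exact hM θ)
  rw [← key2, norm_mul] at hb
  have h2 : ‖(2 * π : ℂ)‖ = 2 * π := by simp [abs_of_pos pi_pos]
  rw [h2, sub_zero, abs_of_pos two_pi_pos] at hb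
  exact le_of_mul_le_mul_right hb two_pi_pos

/-- the link with the hypergeometric function -/
theorem link (s : ℂ) (z r : ℝ) (hr : 0 < r) (μ : ℕ) :
    ∑' n : ℕ, aCoef s (z / r / 2) (r / 2) (n, n + μ) =
    (r : ℂ) ^ μ * (ascPochhammer ℂ μ).eval s / (μ.factorial : ℂ) *
      ((1 / 2) ^ μ * hyp2F1 ((μ + s) / 2) ((μ + 1 + s) / 2) (μ + 1) z) := by
  rw [hyp2F1, ← mul_assoc, ← tsum_mul_left]
  congr 1
  funext n
  simp only [aCoef]
  rw [show n + (n + μ) = 2 * n + μ by ring, poch_split, ← poch_fact]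
  have h1 : (r : ℂ) ≠ 0 := by exact_mod_cast hr.ne'
  have h2 : (μ.factorial : ℂ) ≠ 0 := by exact_mod_cast μ.factorial_ne_zero
  have h3 : (n.factorial : ℂ) ≠ 0 := by exact_mod_cast n.factorial_ne_zero
  have h4 : (ascPochhammer ℂ n).eval ((μ : ℂ) + 1) ≠ 0 := by
    intro h
    have := poch_fact μ n
    rw [h, zero_mul] at this
    exact (n + μ).factorial_ne_zero (by exact_mod_cast this.symm)
  push_cast
  simp only [div_pow, pow_add, one_pow]
  field_simp
  rw [show (4 : ℂ) = 2 * 2 by norm_num, mul_pow]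
  try ring

theorem arg_bound (w : ℂ) (β : ℝ) (hw : 0 < w.re) (hβ0 : 0 ≤ β) (hβ : β < π / 2)
    (h : w.im ^ 2 ≤ Real.sin β ^ 2 * ‖w‖ ^ 2) : w.arg ≤ β := by
  rw [Complex.arg_of_re_nonneg hw.le]
  have hn : 0 < ‖w‖ := norm_pos_iff.2 (fun h => by simp [h] at hw)
  have hs : 0 ≤ Real.sin β := Real.sin_nonneg_of_nonneg_of_le_pi hβ0 (by linarith [pi_pos])
  rw [Real.arcsin_le_iff_le_sin' ⟨by linarith [pi_pos], by linarith⟩, div_le_iff₀ hn]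
  refine le_of_abs_le (abs_le_of_sq_le_sq (by rw [mul_pow]; exact h) (by positivity))

theorem cpow_bound (p q k β θ : ℝ) (hp : 0 ≤ p) (hq : 0 ≤ q) (hpq : p + q < 1) (hk : 0 < k)
    (hβ0 : 0 ≤ β) (hβ : β < π / 2) (h : (q - p) ^ 2 ≤ Real.sin β ^ 2 * (1 - 4 * p * q)) :
    ‖(1 - (p * Complex.exp (Complex.I * θ) + q * Complex.exp (-(Complex.I * θ)))) ^
      (-(1 / 2 + Complex.I * k) : ℂ)‖ ≤ (1 - (p + q)) ^ (-(1 / 2 : ℝ)) * Real.exp (β * k) := by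
  set w : ℂ := 1 - (p * Complex.exp (Complex.I * θ) + q * Complex.exp (-(Complex.I * θ))) with hw
  have e1 : Complex.exp (Complex.I * θ) = (Real.cos θ : ℂ) + (Real.sin θ : ℂ) * Complex.I := by
    rw [mul_comm, Complex.exp_mul_I]; push_cast; ring
  have e2 : Complex.exp (-(Complex.I * θ)) = (Real.cos θ : ℂ) - (Real.sin θ : ℂ) * Complex.I := by
    rw [show -(Complex.I * θ) = (-θ : ℂ) * Complex.I by ring, Complex.exp_mul_I]
    push_cast; rw [Complex.cos_neg, Complex.sin_neg]; ring
  have hre : w.re = 1 - (p + q) * Real.cos θ := by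
    rw [hw, e1, e2]; simp [-Complex.ofReal_cos, -Complex.ofReal_sin]; ring
  have him : w.im = (q - p) * Real.sin θ := by
    rw [hw, e1, e2]; simp [-Complex.ofReal_cos, -Complex.ofReal_sin]; ring
  have hre1 : 1 - (p + q) ≤ w.re := by
    rw [hre]; nlinarith [Real.cos_le_one θ]
  have hre0 : 0 < w.re := by linarith
  have hn : 1 - (p + q) ≤ ‖w‖ := hre1.trans (Complex.re_le_norm w)
  have hw0 : w ≠ 0 := fun h => by simp [h] at hre0
  have harg : w.arg ≤ β := by
    apply arg_bound w β hre0 hβ0 hβ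
    have hnsq : ‖w‖ ^ 2 = w.re ^ 2 + w.im ^ 2 := by
      rw [← Complex.normSq_eq_norm_sq, Complex.normSq_apply]; ring
    have hd : 0 < 1 - 4 * p * q := by nlinarith [sq_nonneg (p - q)]
    have h3 : w.im ^ 2 * (1 - 4 * p * q) ≤ (q - p) ^ 2 * ‖w‖ ^ 2 := by
      rw [hnsq, hre, him]
      have : (Real.sin θ) ^ 2 * (1 - 4 * p * q) ≤
          (1 - (p + q) * Real.cos θ) ^ 2 + ((q - p) * Real.sin θ) ^ 2 := by
        have := Real.sin_sq_add_cos_sq θ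
        have e : Real.sin θ ^ 2 = 1 - Real.cos θ ^ 2 := by linarith
        rw [mul_pow, e]
        nlinarith [sq_nonneg (p + q - Real.cos θ)]
      calc ((q - p) * Real.sin θ) ^ 2 * (1 - 4 * p * q)
          = (q - p) ^ 2 * (Real.sin θ ^ 2 * (1 - 4 * p * q)) := by ring
        _ ≤ _ := mul_le_mul_of_nonneg_left this (sq_nonneg _)
    have h4 : w.im ^ 2 * (1 - 4 * p * q) ≤ (Real.sin β ^ 2 * ‖w‖ ^ 2) * (1 - 4 * p * q) :=
      h3.trans (by nlinarith [mul_le_mul_of_nonneg_right h (sq_nonneg ‖w‖)])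
    exact le_of_mul_le_mul_right h4 hd
  rw [Complex.norm_cpow_of_ne_zero hw0, div_eq_mul_inv, ← Real.exp_neg]
  have r1 : (-(1 / 2 + Complex.I * k) : ℂ).re = -(1 / 2 : ℝ) := by simp
  have r2 : (-(1 / 2 + Complex.I * k) : ℂ).im = -k := by simp
  rw [r1, r2]
  refine mul_le_mul ?_ ?_ (Real.exp_pos _).le (Real.rpow_nonneg (by linarith) _)
  · exact Real.rpow_le_rpow_of_nonpos (by linarith) hn (by norm_num)
  · apply Real.exp_le_exp.2
    nlinarith

/-- the left-hand side -/
noncomputable def lhsN (z : ℝ) (μ : ℕ) (k : ℝ) : ℝ :=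
  (2 : ℝ) ^ (-(μ : ℝ)) *
          ‖hyp2F1 (((μ : ℂ) + 1 / 2 + Complex.I * k) / 2)
            (((μ : ℂ) + 3 / 2 + Complex.I * k) / 2) ((μ : ℂ) + 1) (z : ℂ)‖

theorem core (z r σ β k T : ℝ) (μ : ℕ) (hz0 : 0 ≤ z) (hr : 0 < r) (hA : z / r / 2 + r / 2 < 1)
    (hk : 0 < k) (hβ0 : 0 < β) (hβ : β ≤ 1) (hσ0 : 0 ≤ σ) (hσ : σ ≤ β - β ^ 3 / 6)
    (h : (r / 2 - z / r / 2) ^ 2 ≤ σ ^ 2 * (1 - z)) (hz1 : z < 1)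
    (hT : (μ.factorial : ℝ) ≤ T * ‖(ascPochhammer ℂ μ).eval (1 / 2 + Complex.I * k : ℂ)‖) :
    lhsN z μ k * r ^ μ ≤
      T * ((1 - (z / r / 2 + r / 2)) ^ (-(1 / 2 : ℝ)) * Real.exp (β * k)) := by
  have hsin : σ ≤ Real.sin β := hσ.trans (Real.sin_gt_sub_cube hβ0).le
  have h4 : 4 * (z / r / 2) * (r / 2) = z := by field_simp; try ring
  have hb := coef_bound (1 / 2 + Complex.I * k) (z / r / 2) (r / 2) (by positivity) (by positivity)
    hA μ _ (fun θ => cpow_bound (z / r / 2) (r / 2) k β θ (by positivity) (by positivity) hA hk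
      hβ0.le (by linarith [pi_gt_three]) (by
        rw [h4]
        refine h.trans (mul_le_mul_of_nonneg_right ?_ (by linarith))
        exact pow_le_pow_left₀ hσ0 hsin 2))
  rw [link _ z r hr] at hb
  set M := (1 - (z / r / 2 + r / 2)) ^ (-(1 / 2 : ℝ)) * Real.exp (β * k) with hM
  have hN : ‖((1 / 2 : ℂ) ^ μ * hyp2F1 ((μ + (1 / 2 + Complex.I * k)) / 2)
      ((μ + 1 + (1 / 2 + Complex.I * k)) / 2) (μ + 1) z)‖ = lhsN z μ k := by
    rw [lhsN, norm_mul, Real.rpow_neg (by norm_num), Real.rpow_natCast]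
    congr 1
    · simp
    · congr 2 <;> ring
  rw [norm_mul, hN, norm_div, norm_mul, norm_pow, Complex.norm_real, Real.norm_of_nonneg hr.le,
    Complex.norm_natCast] at hb
  set P := ‖(ascPochhammer ℂ μ).eval (1 / 2 + Complex.I * k : ℂ)‖ with hP
  have hf : (0 : ℝ) < μ.factorial := by exact_mod_cast μ.factorial_pos
  have hM0 : 0 ≤ M := mul_nonneg (Real.rpow_nonneg (by linarith) _) (Real.exp_pos _).le
  have hP0 : 0 < P := by
    rcases (norm_nonneg _ : 0 ≤ P).lt_or_eq with h | h
    · exact h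
    · rw [← hP] at h
      rw [← h] at hT; linarith
  have h5 : lhsN z μ k * r ^ μ * P ≤ μ.factorial * M := by
    rw [div_mul_eq_mul_div, div_le_iff₀ hf] at hb
    linarith
  have h6 := h5.trans (mul_le_mul_of_nonneg_right hT hM0)
  have h7 : lhsN z μ k * r ^ μ * P ≤ (T * M) * P := by linarith
  exact le_of_mul_le_mul_right h7 hP0

theorem norm_add_ge (k : ℝ) (j : ℕ) :
    ‖(1 / 2 + Complex.I * k + j : ℂ)‖ ^ 2 = (j + 1 / 2) ^ 2 + k ^ 2 := by
  rw [← Complex.normSq_eq_norm_sq, Complex.normSq_apply]; simp; ring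

theorem pre1 (k : ℝ) (μ : ℕ) : (μ.factorial : ℝ) ≤
    ((μ : ℝ) + 1) * ‖(ascPochhammer ℂ μ).eval (1 / 2 + Complex.I * k : ℂ)‖ := by
  induction μ with
  | zero => simp
  | succ n ih =>
    rw [ascPochhammer_succ_eval, norm_mul, Nat.factorial_succ]
    set P := ‖(ascPochhammer ℂ n).eval (1 / 2 + Complex.I * k : ℂ)‖ with hP
    have hP0 : 0 ≤ P := norm_nonneg _
    have h1 : (n : ℝ) + 1 / 2 ≤ ‖(1 / 2 + Complex.I * k + n : ℂ)‖ := by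
      refine le_of_sq_le_sq ?_ (norm_nonneg _)
      rw [norm_add_ge]; nlinarith [sq_nonneg k]
    push_cast
    have hn : (0 : ℝ) ≤ n := Nat.cast_nonneg n
    calc ((n : ℝ) + 1) * n.factorial ≤ (n + 1) * ((n + 1) * P) := by gcongr
      _ ≤ (n + 1 + 1) * (P * (n + 1 / 2)) := by nlinarith [mul_nonneg hn hP0]
      _ ≤ _ := by gcongr

theorem pre2 (k : ℝ) (μ : ℕ) (hk : (μ : ℝ) ≤ k) : (μ.factorial : ℝ) ≤
    (9 / 10) ^ μ * ‖(ascPochhammer ℂ μ).eval (1 / 2 + Complex.I * k : ℂ)‖ := by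
  induction μ with
  | zero => simp
  | succ n ih =>
    push_cast at hk
    have ih := ih (by linarith)
    rw [ascPochhammer_succ_eval, norm_mul, Nat.factorial_succ]
    set P := ‖(ascPochhammer ℂ n).eval (1 / 2 + Complex.I * k : ℂ)‖ with hP
    have hP0 : 0 ≤ P := norm_nonneg _
    have hn : (0 : ℝ) ≤ n := Nat.cast_nonneg n
    have h1 : (10 / 9) * ((n : ℝ) + 1) ≤ ‖(1 / 2 + Complex.I * k + n : ℂ)‖ := by
      refine le_of_sq_le_sq ?_ (norm_nonneg _)
      rw [norm_add_ge]; nlinarith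
    push_cast
    calc ((n : ℝ) + 1) * n.factorial ≤ (n + 1) * ((9 / 10) ^ n * P) := by gcongr
      _ = (9 / 10) ^ (n + 1) * (P * (10 / 9 * (n + 1))) := by rw [pow_succ]; ring
      _ ≤ _ := by gcongr

theorem bern_s11 (ρ : ℝ) (h : 1 < ρ) : ∃ D > 0, ∀ μ : ℕ, (μ : ℝ) + 1 ≤ D * ρ ^ μ := by
  have h0 : 0 < ρ - 1 := by linarith
  refine ⟨1 / (ρ - 1) + 1, by positivity, fun μ => ?_⟩
  have := one_add_mul_le_pow (a := ρ - 1) (by linarith) μ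
  rw [show 1 + (ρ - 1) = ρ by ring] at this
  have h1 : (μ : ℝ) + 1 ≤ (1 / (ρ - 1) + 1) * (1 + μ * (ρ - 1)) := by
    have e : (1 / (ρ - 1) + 1) * (1 + μ * (ρ - 1)) = 1 / (ρ - 1) + μ + 1 + μ * (ρ - 1) := by
      field_simp; ring
    rw [e]
    have : 0 ≤ 1 / (ρ - 1) := by positivity
    have : 0 ≤ (μ : ℝ) * (ρ - 1) := by positivity
    linarith
  exact h1.trans (mul_le_mul_of_nonneg_left this (by positivity))

theorem exp_half_le (k : ℝ) : Real.exp (1 / 2 * k) ≤ 2 * Real.sqrt (Real.cosh k) := by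
  rw [show (2 : ℝ) = Real.sqrt 4 by rw [show (4 : ℝ) = 2 ^ 2 by norm_num]; simp,
    ← Real.sqrt_mul (by norm_num)]
  apply Real.le_sqrt_of_sq_le
  rw [← Real.exp_nat_mul, Real.cosh_eq]
  have : Real.exp ((2 : ℕ) * (1 / Real.sqrt 4 * k)) = Real.exp k := by
    rw [show (4 : ℝ) = 2 ^ 2 by norm_num]; simp
  have h2 := Real.exp_pos k
  have h3 := Real.exp_pos (-k)
  rw [this]; linarith

theorem main_exp (z : ℝ) (hz0 : 0 ≤ z) (hz1 : z < 1) :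
    ∃ C > 0, ∀ (μ : ℕ) (k : ℝ), 0 < k → lhsN z μ k ≤ C * Real.exp (1 / 2 * k) := by
  rcases le_or_gt (4 / 5) z with hz | hz
  · obtain ⟨d, hd⟩ : ∃ d, d = Real.sqrt (1 - z) := ⟨_, rfl⟩
    have hd0 : 0 < d := hd ▸ Real.sqrt_pos.2 (by linarith)
    have hdsq : d ^ 2 = 1 - z := hd ▸ Real.sq_sqrt (by linarith)
    have hd1 : d ≤ 45 / 100 := by nlinarith
    have hzd : z = 1 - d ^ 2 := by linarith
    have hr : 0 < 1 + d / 4 := by linarith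
    obtain ⟨D, hD0, hD⟩ := bern_s11 (1 + d / 4) (by linarith)
    have hA : z / (1 + d / 4) / 2 + (1 + d / 4) / 2 < 1 := by
      have : z / (1 + d / 4) < 2 - (1 + d / 4) := by
        rw [div_lt_iff₀ hr]; nlinarith
      linarith
    have hh : ((1 + d / 4) / 2 - z / (1 + d / 4) / 2) ^ 2 ≤ (45 / 100) ^ 2 * (1 - z) := by
      rw [← hdsq, ← mul_pow]
      apply pow_le_pow_left₀
      · have : z / (1 + d / 4) ≤ 1 + d / 4 := by
          rw [div_le_iff₀ hr]; nlinarith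
        linarith
      · have : (1 + d / 4) - 9 / 10 * d ≤ z / (1 + d / 4) := by
          rw [le_div_iff₀ hr]; nlinarith
        linarith
    set K := (1 - (z / (1 + d / 4) / 2 + (1 + d / 4) / 2)) ^ (-(1 / 2 : ℝ)) with hK
    have hK0 : 0 < K := Real.rpow_pos_of_pos (by linarith) _
    refine ⟨D * K, by positivity, fun μ k hk => ?_⟩
    have := core z (1 + d / 4) (45 / 100) (1 / 2) k (μ + 1) μ hz0 hr hA hk (by norm_num)
      (by norm_num) (by norm_num) (by norm_num) hh hz1 (pre1 k μ)
    rw [← hK] at this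
    have hp : 0 < (1 + d / 4) ^ μ := by positivity
    have h2 : lhsN z μ k * (1 + d / 4) ^ μ ≤ (D * K * Real.exp (1 / 2 * k)) * (1 + d / 4) ^ μ := by
      refine this.trans ?_
      calc _ ≤ (D * (1 + d / 4) ^ μ) * (K * Real.exp (1 / 2 * k)) := by gcongr; exact hD μ
        _ = _ := by ring
    exact le_of_mul_le_mul_right h2 hp
  · have he : Real.exp (16 / 100) < 6 / 5 := by
      have h1 : Real.exp (16 / 100) ^ 25 < (6 / 5) ^ 25 := by
        rw [← Real.exp_nat_mul, show ((25 : ℕ) : ℝ) * (16 / 100) = (4 : ℕ) * 1 by norm_num,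
          Real.exp_nat_mul]
        calc Real.exp 1 ^ 4 < 2.7182818286 ^ 4 := by
              gcongr; exact Real.exp_one_lt_d9
          _ < _ := by norm_num
      exact lt_of_pow_lt_pow_left₀ 25 (by norm_num) h1
    obtain ⟨D, hD0, hD⟩ := bern_s11 ((6 / 5) / Real.exp (16 / 100)) (by
      rw [lt_div_iff₀ (Real.exp_pos _)]; linarith)
    have hA1 : z / (6 / 5) / 2 + (6 / 5 : ℝ) / 2 < 1 := by linarith
    have hA2 : z / (9 / 10) / 2 + (9 / 10 : ℝ) / 2 < 1 := by linarith
    have hh1 : ((6 / 5 : ℝ) / 2 - z / (6 / 5) / 2) ^ 2 ≤ (3 / 5) ^ 2 * (1 - z) := by nlinarith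
    have hh2 : ((9 / 10 : ℝ) / 2 - z / (9 / 10) / 2) ^ 2 ≤ (45 / 100) ^ 2 * (1 - z) := by nlinarith
    set K1 := (1 - (z / (6 / 5) / 2 + (6 / 5) / 2)) ^ (-(1 / 2 : ℝ)) with hK1
    set K2 := (1 - (z / (9 / 10) / 2 + (9 / 10) / 2)) ^ (-(1 / 2 : ℝ)) with hK2
    have hK10 : 0 < K1 := Real.rpow_pos_of_pos (by linarith) _
    have hK20 : 0 < K2 := Real.rpow_pos_of_pos (by linarith) _
    refine ⟨D * K1 + K2, by positivity, fun μ k hk => ?_⟩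
    have hE := Real.exp_pos (1 / 2 * k)
    rcases le_total (μ : ℝ) k with hμ | hμ
    · have := core z (9 / 10) (45 / 100) (1 / 2) k ((9 / 10) ^ μ) μ hz0 (by norm_num) hA2 hk
        (by norm_num) (by norm_num) (by norm_num) (by norm_num) hh2 hz1 (pre2 k μ hμ)
      rw [← hK2, mul_comm] at this
      have h2 := le_of_mul_le_mul_left this (by positivity)
      have : 0 < D * K1 * Real.exp (1 / 2 * k) := by positivity
      linarith
    · have := core z (6 / 5) (3 / 5) (66 / 100) k (μ + 1) μ hz0 (by norm_num) hA1 hk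
        (by norm_num) (by norm_num) (by norm_num) (by norm_num) hh1 hz1 (pre1 k μ)
      rw [← hK1] at this
      have hp : (0 : ℝ) < (6 / 5) ^ μ := by positivity
      have h3 : Real.exp (66 / 100 * k) ≤ Real.exp (1 / 2 * k) * Real.exp (16 / 100) ^ μ := by
        rw [← Real.exp_nat_mul, ← Real.exp_add]
        apply Real.exp_le_exp.2; linarith
      have h2 : lhsN z μ k * (6 / 5) ^ μ ≤ (D * K1 * Real.exp (1 / 2 * k)) * (6 / 5) ^ μ := by
        refine this.trans ?_
        calc _ ≤ (D * ((6 / 5) / Real.exp (16 / 100)) ^ μ) *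
              (K1 * (Real.exp (1 / 2 * k) * Real.exp (16 / 100) ^ μ)) := by
                gcongr; exact hD μ
          _ = _ := by
            rw [div_pow]
            have := (Real.exp_pos (16 / 100)).ne'
            field_simp
      have h4 := le_of_mul_le_mul_right h2 hp
      have : 0 < K2 * Real.exp (1 / 2 * k) := by positivity
      linarith

/-- For fixed `z ∈ [0,1)` the bound
`2^{-μ} |₂F₁((μ+1/2+ik)/2, (μ+3/2+ik)/2, μ+1; z)| ≤ C_z √(cosh k)` holds
uniformly in the integer `μ ≥ 0` and the real `k > 0`. -/
theorem hyp2F1_bound (z : ℝ) (hz0 : 0 ≤ z) (hz1 : z < 1) :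
    ∃ C > 0, ∀ (μ : ℕ) (k : ℝ), 0 < k →
      (2 : ℝ) ^ (-(μ : ℝ)) *
          ‖hyp2F1 (((μ : ℂ) + 1 / 2 + Complex.I * k) / 2)
            (((μ : ℂ) + 3 / 2 + Complex.I * k) / 2) ((μ : ℂ) + 1) (z : ℂ)‖ ≤
        C * Real.sqrt (Real.cosh k) := by
  obtain ⟨C, hC, h⟩ := main_exp z hz0 hz1
  refine ⟨C * 2, by positivity, fun μ k hk => ?_⟩
  refine (h μ k hk).trans ?_
  rw [mul_assoc]
  exact mul_le_mul_of_nonneg_left (exp_half_le k) hC.le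
end

section
/- Let a, b, c ∈ ℂ, none of which is a nonpositive integer. Then, as the natural number n tends to infinity, ((a)ₙ·(b)ₙ)/((c)ₙ·n!) ∼ (Γ(c)/(Γ(a)Γ(b)))·n^{a+b−c−1}; that is, the quotient of the left-hand side by the right-hand side tends to 1, where n^{w} := exp(w·log n) for complex w. -/
open Filter

lemma ascPoch_eval_prod (s : ℂ) (n : ℕ) :
    (ascPochhammer ℂ n).eval s = ∏ j ∈ Finset.range n, (s + j) := by
  induction n with
  | zero => simp
  | succ k ih => rw [ascPochhammer_succ_eval, ih, Finset.prod_range_succ]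

lemma ascPoch_eval_ne (s : ℂ) (hs : ∀ m : ℕ, s ≠ -(m : ℂ)) (n : ℕ) :
    (ascPochhammer ℂ n).eval s ≠ 0 := by
  rw [ascPoch_eval_prod]
  exact Finset.prod_ne_zero_iff.mpr fun j _ h => hs j (eq_neg_of_add_eq_zero_left h)

lemma poch_single (s : ℂ) (hs : ∀ m : ℕ, s ≠ -(m : ℂ)) :
    Tendsto (fun n : ℕ => (ascPochhammer ℂ n).eval s * Complex.Gamma s /
      ((n.factorial : ℂ) * Complex.exp ((s - 1) * (Real.log n : ℂ)))) atTop (nhds 1) := by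
  have hG := Complex.Gamma_ne_zero hs
  have h1 : Tendsto (fun n : ℕ => Complex.Gamma s / Complex.GammaSeq s n) atTop (nhds 1) := by
    have := (tendsto_const_nhds (x := Complex.Gamma s)).div (Complex.GammaSeq_tendsto_Gamma s) hG
    rwa [div_self hG] at this
  have h2 : Tendsto (fun n : ℕ => (n : ℂ) / (n + s)) atTop (nhds 1) :=
    tendsto_natCast_div_add_atTop s
  have h3 := h1.mul h2
  rw [one_mul] at h3
  refine h3.congr' ?_
  filter_upwards [eventually_ne_atTop 0] with n hn
  have hn' : (n : ℂ) ≠ 0 := Nat.cast_ne_zero.mpr hn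
  have hsn : (n : ℂ) + s ≠ 0 := fun h => hs n (eq_neg_of_add_eq_zero_right h)
  have hsn' : s + (n : ℂ) ≠ 0 := by rwa [add_comm]
  have hp := ascPoch_eval_ne s hs n
  have hf : (n.factorial : ℂ) ≠ 0 := Nat.cast_ne_zero.mpr n.factorial_ne_zero
  have he : (n : ℂ) ^ s = Complex.exp ((s - 1) * (Real.log n : ℂ)) * n := by
    have h : (Real.log n : ℂ) = Complex.log n := by
      rw [Complex.ofReal_log (Nat.cast_nonneg n)]; simp
    rw [h, Complex.cpow_def_of_ne_zero hn']
    have h' : Complex.log n * s = (s - 1) * Complex.log n + Complex.log n := by ring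
    rw [h', Complex.exp_add, Complex.exp_log hn']
  have hE := Complex.exp_ne_zero ((s - 1) * (Real.log n : ℂ))
  rw [Complex.GammaSeq, Finset.prod_range_succ, ← ascPoch_eval_prod, he]
  generalize Complex.exp ((s - 1) * (Real.log n : ℂ)) = E at *
  rw [add_comm (n : ℂ) s]
  field_simp

/-- Asymptotics of hypergeometric coefficients: if none of `a, b, c` is a nonpositive
integer, then `((a)ₙ (b)ₙ)/((c)ₙ n!) ∼ (Γ(c)/(Γ(a)Γ(b))) n^{a+b-c-1}` as `n → ∞`,
where `n^w = exp(w log n)`. -/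
theorem pochhammer_ratio_asymptotic (a b c : ℂ)
    (ha : ∀ m : ℕ, a ≠ -(m : ℂ)) (hb : ∀ m : ℕ, b ≠ -(m : ℂ))
    (hc : ∀ m : ℕ, c ≠ -(m : ℂ)) :
    Tendsto
      (fun n : ℕ =>
        ((ascPochhammer ℂ n).eval a * (ascPochhammer ℂ n).eval b /
            ((ascPochhammer ℂ n).eval c * (n.factorial : ℂ))) /
          (Complex.Gamma c / (Complex.Gamma a * Complex.Gamma b) *
            Complex.exp ((a + b - c - 1) * (Real.log n : ℂ))))
      atTop (nhds 1) := by
  have h := ((poch_single a ha).mul (poch_single b hb)).div (poch_single c hc) one_ne_zero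
  rw [one_mul, div_one] at h
  refine h.congr fun n => ?_
  have hGa := Complex.Gamma_ne_zero ha
  have hGb := Complex.Gamma_ne_zero hb
  have hGc := Complex.Gamma_ne_zero hc
  have hp := ascPoch_eval_ne c hc n
  have hf : (n.factorial : ℂ) ≠ 0 := Nat.cast_ne_zero.mpr n.factorial_ne_zero
  have he : Complex.exp ((a + b - c - 1) * (Real.log n : ℂ)) =
      Complex.exp ((a - 1) * (Real.log n : ℂ)) * Complex.exp ((b - 1) * (Real.log n : ℂ)) /
        Complex.exp ((c - 1) * (Real.log n : ℂ)) := by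
    rw [← Complex.exp_add, ← Complex.exp_sub]
    congr 1; ring
  have hEa := Complex.exp_ne_zero ((a - 1) * (Real.log n : ℂ))
  have hEb := Complex.exp_ne_zero ((b - 1) * (Real.log n : ℂ))
  have hEc := Complex.exp_ne_zero ((c - 1) * (Real.log n : ℂ))
  rw [he]
  simp only [Pi.div_apply]
  generalize Complex.exp ((a - 1) * (Real.log n : ℂ)) = A at *
  generalize Complex.exp ((b - 1) * (Real.log n : ℂ)) = B at *
  generalize Complex.exp ((c - 1) * (Real.log n : ℂ)) = C at *
  field_simp
end
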